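/- arXiv:math/9804147 — 4 statements merged into one kernel-verified Lean document; each statement's English description precedes it below -/
import Mathlib

section
/- Let Ω ⊂ ℝ² be a bounded open strictly convex C^{2,α} domain and let −H_max < H ≤ H̃ < H_max, with u(·;H) and u(·;H̃) the corresponding solutions of (*). Then u(x;H) ≥ u(x;H̃) for all x ∈ Ω, with equality at some point of Ω only if H = H̃. Moreover the family is odd in H: u(x;−H) = −u(x;H) for all x ∈ Ω and |H| ≤ H_max. -/
/-!
All three claims follow from the comparison principle for the mean curvature operator `M`:
if `M u ≤ M u'` in `Ω` (here `2H ≤ 2H'`) and `u = u'` on `∂Ω`, then `u' ≤ u` in `Ω`.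

Multiplying by `W³`, `W = √(1+|Du|²)`, the equation `M u = 2H` becomes
`tr D²u + D²u(p⊥, p⊥) = 2H W³` with `p = Du` (`mcDiv_mul`), whose second-order part is elliptic
with constant at least one. If `u' - u` had a positive maximum `m` over the closure of `Ω`, then
for small `ε > 0` the function `u' - u + ε exp(γ x₀)` would attain its maximum in the compact
set `{u' - u ≥ m/2} ⊆ Ω`. There `D(u' - u) = (-δ, 0)` with `δ = ε γ exp(γ x₀)`, the
second-order part of the difference of the two equations is at most `-γ δ`, and the remaining
terms are at most `C δ` with `C` independent of `γ` and `ε`, because first and second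
derivatives are bounded on that set; `γ > C` is a contradiction (`comparison`).

If ordered solutions touch inside `Ω`, the same conditions with `ε = 0` give `H' ≤ H`
(`touching`). Oddness holds because `-w` solves the problem for `-K` and the comparison
principle, used in both directions, gives uniqueness.
-/

noncomputable section
open Set
open scoped RealInnerProductSpace

/-- The plane ℝ². -/
abbrev E2 : Type := EuclideanSpace ℝ (Fin 2)

/-- Standard basis vectors of ℝ². -/
def e2 (i : Fin 2) : E2 := EuclideanSpace.single i 1

/-- The mean curvature operator `M u = div (Du / √(1+|Du|²))`. -/
def mcDiv (u : E2 → ℝ) (x : E2) : ℝ :=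
  ∑ i : Fin 2,
    fderiv ℝ (fun y => (Real.sqrt (1 + ‖gradient u y‖ ^ 2))⁻¹ • gradient u y) x (e2 i) i

/-- `u` is a solution of problem (*) on `Ω` with mean curvature `H`:
`u ∈ C²(Ω) ∩ C⁰(closure Ω)`, `div(Du/√(1+|Du|²)) = 2H` in `Ω`, `u = 0` on `∂Ω`. -/
def SolvesStar (Ω : Set E2) (H : ℝ) (u : E2 → ℝ) : Prop :=
  ContDiffOn ℝ 2 u Ω ∧ ContinuousOn u (closure Ω) ∧
    (∀ x ∈ Ω, mcDiv u x = 2 * H) ∧ (∀ x ∈ frontier Ω, u x = 0)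

/-- `u` is a `C²(closure Ω)` solution of problem (*). -/
def SolvesStarC2 (Ω : Set E2) (H : ℝ) (u : E2 → ℝ) : Prop :=
  ContDiffOn ℝ 2 u (closure Ω) ∧ (∀ x ∈ Ω, mcDiv u x = 2 * H) ∧ ∀ x ∈ frontier Ω, u x = 0

/-- `H_max = sup {H ≥ 0 : (*) has a unique solution in C²(closure Ω)}`. -/
def Hmax (Ω : Set E2) : ℝ :=
  sSup {H : ℝ | 0 ≤ H ∧ (∃ u, SolvesStarC2 Ω H u) ∧
    ∀ u v, SolvesStarC2 Ω H u → SolvesStarC2 Ω H v → EqOn u v (closure Ω)}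

/-- The Hessian bilinear form of `u` at `x` evaluated at `(w₁, w₂)`. -/
def hess2 (u : E2 → ℝ) (x : E2) (w₁ w₂ : E2) : ℝ :=
  fderiv ℝ (fun y => fderiv ℝ u y w₂) x w₁

/-- `G_v = v_xx v_yy − v_xy²`, the determinant of the Hessian. -/
def Gdet (v : E2 → ℝ) (x : E2) : ℝ :=
  hess2 v x (e2 0) (e2 0) * hess2 v x (e2 1) (e2 1) - hess2 v x (e2 0) (e2 1) ^ 2

/-- `L_v = v_y² v_xx − 2 v_x v_y v_xy + v_x² v_yy`. -/
def Lcurv (v : E2 → ℝ) (x : E2) : ℝ :=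
  (fderiv ℝ v x (e2 1)) ^ 2 * hess2 v x (e2 0) (e2 0)
    - 2 * fderiv ℝ v x (e2 0) * fderiv ℝ v x (e2 1) * hess2 v x (e2 0) (e2 1)
    + (fderiv ℝ v x (e2 0)) ^ 2 * hess2 v x (e2 1) (e2 1)

/-- `Ω` is a bounded strictly convex domain with `C^{2,α}` boundary: it has a `C²` defining
function `f` with `α`-Hölder second derivative, nonvanishing boundary gradient, and the
second fundamental form of the boundary (tangential Hessian of `f`) is positive, i.e. the
curvature of `∂Ω` is everywhere positive. -/
def StrictlyConvexDomain (α : ℝ) (Ω : Set E2) : Prop :=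
  IsOpen Ω ∧ Bornology.IsBounded Ω ∧ Ω.Nonempty ∧
    ∃ f : E2 → ℝ, ContDiff ℝ 2 f ∧ Ω = {x | f x < 0} ∧ frontier Ω = {x | f x = 0} ∧
      (∃ C : ℝ, ∀ x y : E2,
        ‖iteratedFDeriv ℝ 2 f x - iteratedFDeriv ℝ 2 f y‖ ≤ C * ‖x - y‖ ^ α) ∧
      (∀ x ∈ frontier Ω, gradient f x ≠ 0) ∧
      (∀ x ∈ frontier Ω, ∀ w : E2, w ≠ 0 → ⟪w, gradient f x⟫ = (0:ℝ) →
        0 < hess2 f x w w)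

/-- The unit direction `e_θ = (cos θ, sin θ)`. -/
def dirVec (θ : ℝ) : E2 := Real.cos θ • e2 0 + Real.sin θ • e2 1

/-! ### The mean curvature operator in non-divergence form -/

theorem gradient_apply_e2 (u : E2 → ℝ) (y : E2) (i : Fin 2) :
    gradient u y i = fderiv ℝ u y (e2 i) := by
  have h : ⟪gradient u y, e2 i⟫ = fderiv ℝ u y (e2 i) := by
    simp [gradient]
  rw [← h, e2, EuclideanSpace.inner_single_right]
  simp

theorem norm_gradient_sq (u : E2 → ℝ) (y : E2) :
    ‖gradient u y‖ ^ 2 = fderiv ℝ u y (e2 0) ^ 2 + fderiv ℝ u y (e2 1) ^ 2 := by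
  rw [EuclideanSpace.norm_sq_eq]
  simp [Fin.sum_univ_two, gradient_apply_e2]

/-- The area element `W = √(1+|Du|²)`, in coordinates. -/
def areaW (u : E2 → ℝ) (y : E2) : ℝ :=
  Real.sqrt (1 + (fderiv ℝ u y (e2 0) ^ 2 + fderiv ℝ u y (e2 1) ^ 2))

theorem areaW_sq (u : E2 → ℝ) (y : E2) :
    areaW u y ^ 2 = 1 + (fderiv ℝ u y (e2 0) ^ 2 + fderiv ℝ u y (e2 1) ^ 2) :=
  Real.sq_sqrt (by positivity)

theorem areaW_pos (u : E2 → ℝ) (y : E2) : 0 < areaW u y :=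
  Real.sqrt_pos.2 (by positivity)

theorem differentiableAt_fderiv {u : E2 → ℝ} {x : E2} (hu : ContDiffAt ℝ 2 u x) :
    DifferentiableAt ℝ (fderiv ℝ u) x :=
  (hu.fderiv_right (m := 1) (by norm_num)).differentiableAt (by norm_num)

theorem hess2_eq {u : E2 → ℝ} {x : E2} (hu : ContDiffAt ℝ 2 u x) (v w : E2) :
    hess2 u x v w = fderiv ℝ (fderiv ℝ u) x v w := by
  unfold hess2
  rw [((differentiableAt_fderiv hu).hasFDerivAt.clm_apply (hasFDerivAt_const w x)).fderiv]
  simp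

/-- Non-divergence form of the mean curvature operator, cleared of denominators:
`W³ M u = tr D²u + D²u(p⊥, p⊥)` with `p = Du`. -/
theorem mcDiv_mul {u : E2 → ℝ} {x : E2} (hu : ContDiffAt ℝ 2 u x) :
    mcDiv u x * areaW u x ^ 3 =
      hess2 u x (e2 0) (e2 0) + hess2 u x (e2 1) (e2 1)
      + (fderiv ℝ u x (e2 1) ^ 2 * hess2 u x (e2 0) (e2 0)
        - fderiv ℝ u x (e2 0) * fderiv ℝ u x (e2 1) *
          (hess2 u x (e2 0) (e2 1) + hess2 u x (e2 1) (e2 0))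
        + fderiv ℝ u x (e2 0) ^ 2 * hess2 u x (e2 1) (e2 1)) := by
  have hd : ∀ i, HasFDerivAt (fun y => fderiv ℝ u y (e2 i))
      (fderiv ℝ (fun y => fderiv ℝ u y (e2 i)) x) x := fun i =>
    ((differentiableAt_fderiv hu).clm_apply (differentiableAt_const _)).hasFDerivAt
  have hW := areaW_pos u x
  have hWd := (((((hd 0).pow 2).add ((hd 1).pow 2)).const_add 1).sqrt (by
    simp only [Pi.add_apply]; positivity))
  have hcomp : ∀ i, HasFDerivAt (fun y =>
      ((Real.sqrt (1 + ‖gradient u y‖ ^ 2))⁻¹ • gradient u y) i) _ x := fun i => by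
    have h := ((hasDerivAt_inv hW.ne').comp_hasFDerivAt x hWd).mul (hd i)
    refine h.congr_of_eventuallyEq (Filter.Eventually.of_forall fun y => ?_)
    simp [norm_gradient_sq, gradient_apply_e2, areaW]
  have hF : DifferentiableAt ℝ (fun y =>
      (Real.sqrt (1 + ‖gradient u y‖ ^ 2))⁻¹ • gradient u y) x :=
    differentiableAt_euclidean.2 fun i => (hcomp i).differentiableAt
  have hval : ∀ i v, fderiv ℝ (fun y =>
      (Real.sqrt (1 + ‖gradient u y‖ ^ 2))⁻¹ • gradient u y) x v i =
      fderiv ℝ (fun y =>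
      ((Real.sqrt (1 + ‖gradient u y‖ ^ 2))⁻¹ • gradient u y) i) x v := fun i v => by
    have := ((EuclideanSpace.proj (𝕜 := ℝ) i).hasFDerivAt.comp x hF.hasFDerivAt).fderiv
    exact (congrArg (fun L : E2 →L[ℝ] ℝ => L v) this).symm
  unfold mcDiv
  rw [Fin.sum_univ_two, hval, hval, (hcomp 0).fderiv, (hcomp 1).fderiv]
  have hsq := areaW_sq u x
  simp only [hess2]
  have hs : Real.sqrt (1 + (fderiv ℝ u x (e2 0) ^ 2 + fderiv ℝ u x (e2 1) ^ 2)) = areaW u x := rfl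
  simp [hs]
  field_simp
  rw [hsq]
  ring

/-! ### Necessary conditions at an interior maximum -/

/-- Second-order necessary condition at a local maximum, in one variable. -/
theorem second_deriv_nonpos_of_isLocalMax {g g' : ℝ → ℝ} {c : ℝ}
    (hg : ∀ᶠ t in nhds 0, HasDerivAt g (g' t) t) (hg' : HasDerivAt g' c 0)
    (hmax : IsLocalMax g 0) : g' 0 = 0 ∧ c ≤ 0 := by
  have h0 : HasDerivAt g (g' 0) 0 := hg.self_of_nhds
  have hz : g' 0 = 0 := hmax.hasDerivAt_eq_zero h0
  refine ⟨hz, ?_⟩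
  by_contra! hc
  have hder : deriv g =ᶠ[nhds 0] g' := hg.mono fun t ht => ht.deriv
  have hdd : deriv (deriv g) 0 = c := by rw [hder.deriv_eq, hg'.deriv]
  have hmin : IsLocalMin g 0 := isLocalMin_of_deriv_deriv_pos (by rw [hdd]; exact hc)
    (by rw [h0.deriv, hz]) h0.continuousAt
  -- being both a local maximum and a local minimum, `0` is a point of local constancy
  have hconst : g =ᶠ[nhds 0] fun _ => g 0 := by
    filter_upwards [hmax, hmin] with t h1 h2 using le_antisymm h1 h2
  have : deriv (deriv g) 0 = 0 := by
    rw [hconst.deriv.deriv_eq]; simp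
  linarith

theorem hasDerivAt_line (x v : E2) (t : ℝ) : HasDerivAt (fun t : ℝ => x + t • v) v t := by
  simpa using ((hasDerivAt_id t).smul_const v).const_add x

theorem eventually_hasDerivAt_line {u : E2 → ℝ} {x : E2} (hu : ContDiffAt ℝ 2 u x) (v : E2) :
    ∀ᶠ t : ℝ in nhds 0, HasDerivAt (fun t : ℝ => u (x + t • v)) (fderiv ℝ u (x + t • v) v) t := by
  have hc : Filter.Tendsto (fun t : ℝ => x + t • v) (nhds 0) (nhds x) := by
    simpa [ContinuousAt] using (hasDerivAt_line x v 0).continuousAt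
  filter_upwards [hc.eventually (hu.eventually (by simp))] with t ht
  exact (ht.differentiableAt (by norm_num)).hasFDerivAt.comp_hasDerivAt t (hasDerivAt_line x v t)

theorem hasDerivAt_line_fderiv {u : E2 → ℝ} {x : E2} (hu : ContDiffAt ℝ 2 u x) (v : E2) :
    HasDerivAt (fun t : ℝ => fderiv ℝ u (x + t • v) v) (hess2 u x v v) 0 := by
  have h : HasFDerivAt (fun y => fderiv ℝ u y v) (fderiv ℝ (fun y => fderiv ℝ u y v) x)
      (x + (0 : ℝ) • v) := by
    simpa using ((differentiableAt_fderiv hu).clm_apply (differentiableAt_const v)).hasFDerivAt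
  exact h.comp_hasDerivAt 0 (hasDerivAt_line x v 0)

/-- First- and second-order conditions in direction `v` at an interior maximum of
`u' - u + ε exp(γ x₀)`. -/
theorem max_conditions {u u' : E2 → ℝ} {x : E2} (hu : ContDiffAt ℝ 2 u x)
    (hu' : ContDiffAt ℝ 2 u' x) (ε γ : ℝ)
    (hmax : IsLocalMax (fun y : E2 => u' y - u y + ε * Real.exp (γ * y 0)) x) (v : E2) :
    fderiv ℝ u' x v - fderiv ℝ u x v + ε * (Real.exp (γ * x 0) * (γ * v 0)) = 0 ∧
    hess2 u' x v v - hess2 u x v v + ε * (Real.exp (γ * x 0) * (γ * v 0) * (γ * v 0)) ≤ 0 := by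
  have hlin : ∀ t : ℝ, HasDerivAt (fun t : ℝ => γ * (x + t • v) 0) (γ * v 0) t := fun t => by
    simpa using (((hasDerivAt_id t).mul_const (v 0)).const_add (x 0)).const_mul γ
  have h := second_deriv_nonpos_of_isLocalMax
    (g := fun t : ℝ => u' (x + t • v) - u (x + t • v) + ε * Real.exp (γ * (x + t • v) 0))
    (g' := fun t : ℝ => fderiv ℝ u' (x + t • v) v - fderiv ℝ u (x + t • v) v
      + ε * (Real.exp (γ * (x + t • v) 0) * (γ * v 0)))
    (c := hess2 u' x v v - hess2 u x v v + ε * (Real.exp (γ * x 0) * (γ * v 0) * (γ * v 0)))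
    (by
      filter_upwards [eventually_hasDerivAt_line hu v, eventually_hasDerivAt_line hu' v]
        with t h1 h2
      exact (h2.sub h1).add (((hlin t).exp).const_mul ε))
    (by
      have h3 := (((hlin 0).exp).mul_const (γ * v 0)).const_mul ε
      have h4 := ((hasDerivAt_line_fderiv hu' v).sub (hasDerivAt_line_fderiv hu v)).add h3
      rw [zero_smul, add_zero] at h4
      exact h4)
    (by
      have hc : Filter.Tendsto (fun t : ℝ => x + t • v) (nhds 0) (nhds x) := by
        simpa [ContinuousAt] using (hasDerivAt_line x v 0).continuousAt
      have := hc.eventually hmax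
      simpa [IsLocalMax, IsMaxFilter] using this)
  simpa using h

theorem hess2_perp {u : E2 → ℝ} {x : E2} (hu : ContDiffAt ℝ 2 u x) (a b : ℝ) :
    hess2 u x (b • e2 0 - a • e2 1) (b • e2 0 - a • e2 1) =
      b ^ 2 * hess2 u x (e2 0) (e2 0)
        - a * b * (hess2 u x (e2 0) (e2 1) + hess2 u x (e2 1) (e2 0))
        + a ^ 2 * hess2 u x (e2 1) (e2 1) := by
  simp only [hess2_eq hu, map_sub, map_smul, sub_apply,
    smul_apply, smul_eq_mul]
  ring

/-- The combination of the conditions at an interior maximum of `u' - u + ε exp(γ x₀)` that is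
adapted to the mean curvature operator at `u'`: writing `δ = ε γ exp(γ x₀)`, the difference
`u' - u` has gradient `(-δ, 0)`, and the elliptic second-order part is at most `-γ δ`. -/
theorem max_elliptic {u u' : E2 → ℝ} {x : E2} (hu : ContDiffAt ℝ 2 u x)
    (hu' : ContDiffAt ℝ 2 u' x) {ε γ : ℝ} (hε : 0 ≤ ε)
    (hmax : IsLocalMax (fun y : E2 => u' y - u y + ε * Real.exp (γ * y 0)) x) :
    fderiv ℝ u' x (e2 0) = fderiv ℝ u x (e2 0) - ε * γ * Real.exp (γ * x 0) ∧
    fderiv ℝ u' x (e2 1) = fderiv ℝ u x (e2 1) ∧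
    mcDiv u' x * areaW u' x ^ 3 ≤ 
      hess2 u x (e2 0) (e2 0) + hess2 u x (e2 1) (e2 1)
      + (fderiv ℝ u' x (e2 1) ^ 2 * hess2 u x (e2 0) (e2 0)
        - fderiv ℝ u' x (e2 0) * fderiv ℝ u' x (e2 1) *
          (hess2 u x (e2 0) (e2 1) + hess2 u x (e2 1) (e2 0))
        + fderiv ℝ u' x (e2 0) ^ 2 * hess2 u x (e2 1) (e2 1))
      - γ * (ε * γ * Real.exp (γ * x 0)) := by
  have h0 := max_conditions hu hu' ε γ hmax (e2 0)
  have h1 := max_conditions hu hu' ε γ hmax (e2 1)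
  have hp := (max_conditions hu hu' ε γ hmax
    (fderiv ℝ u' x (e2 1) • e2 0 - fderiv ℝ u' x (e2 0) • e2 1)).2
  rw [hess2_perp hu, hess2_perp hu'] at hp
  have e00 : (e2 0) 0 = 1 := by simp [e2]
  have e10 : (e2 1) 0 = 0 := by simp [e2]
  rw [e00] at h0
  rw [e10] at h1
  have hnn : 0 ≤ ε * (Real.exp (γ * x 0) *
      (γ * (fderiv ℝ u' x (e2 1) • e2 0 - fderiv ℝ u' x (e2 0) • e2 1 : E2) 0) *
      (γ * (fderiv ℝ u' x (e2 1) • e2 0 - fderiv ℝ u' x (e2 0) • e2 1 : E2) 0)) := by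
    rw [mul_assoc (Real.exp _)]
    exact mul_nonneg hε (mul_nonneg (Real.exp_pos _).le (mul_self_nonneg _))
  refine ⟨by linarith [h0.1], by linarith [h1.1], ?_⟩
  rw [mcDiv_mul hu']
  have h02 := h0.2
  have h12 := h1.2
  ring_nf at hnn h02 h12 hp ⊢
  linarith

/-! ### The comparison principle -/

theorem areaW_sub_le {u u' : E2 → ℝ} {x : E2} {δ : ℝ} (hδ : 0 ≤ δ)
    (h0 : fderiv ℝ u' x (e2 0) = fderiv ℝ u x (e2 0) - δ)
    (h1 : fderiv ℝ u' x (e2 1) = fderiv ℝ u x (e2 1)) :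
    |areaW u' x - areaW u x| ≤ δ := by
  have a := areaW_sq u x
  have a' := areaW_sq u' x
  have p := areaW_pos u x
  have p' := areaW_pos u' x
  rw [h0, h1] at a'
  have b : |fderiv ℝ u x (e2 0)| ≤ areaW u x := abs_le_of_sq_le_sq (by nlinarith) p.le
  have b' : |fderiv ℝ u x (e2 0) - δ| ≤ areaW u' x := abs_le_of_sq_le_sq (by nlinarith) p'.le
  rw [abs_le] at b b' ⊢
  constructor <;> nlinarith

theorem contDiffAt_of_solves {Ω : Set E2} (hΩ : IsOpen Ω) {H : ℝ} {u : E2 → ℝ}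
    (hu : SolvesStar Ω H u) {x : E2} (hx : x ∈ Ω) : ContDiffAt ℝ 2 u x :=
  hu.1.contDiffAt (hΩ.mem_nhds hx)

theorem exists_bound {K : Set E2} (hK : IsCompact K) {u : E2 → ℝ}
    (hu : ∀ x ∈ K, ContDiffAt ℝ 2 u x) :
    ∃ M : ℝ, ∀ x ∈ K, (∀ i, |fderiv ℝ u x (e2 i)| ≤ M) ∧
      (∀ i j, |hess2 u x (e2 i) (e2 j)| ≤ M) ∧ areaW u x ≤ M := by
  have c1 : ContinuousOn (fderiv ℝ u) K := fun x hx =>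
    ((hu x hx).fderiv_right (m := 1) (by norm_num)).continuousAt.continuousWithinAt
  have c2 : ContinuousOn (fderiv ℝ (fderiv ℝ u)) K := fun x hx =>
    (((hu x hx).fderiv_right (m := 1) (by norm_num)).fderiv_right
      (m := 0) (by norm_num)).continuousAt.continuousWithinAt
  obtain ⟨A, hA⟩ := hK.exists_bound_of_continuousOn c1
  obtain ⟨B, hB⟩ := hK.exists_bound_of_continuousOn (E := E2 →L[ℝ] E2 →L[ℝ] ℝ) c2
  have n1 : ∀ i, ‖e2 i‖ = 1 := fun i => by simp [e2]
  refine ⟨|A| + |A| + 1 + |B|, fun x hx => ?_⟩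
  have hA' : ∀ i, |fderiv ℝ u x (e2 i)| ≤ |A| := fun i => by
    have := (fderiv ℝ u x).le_opNorm (e2 i)
    rw [n1, mul_one, Real.norm_eq_abs] at this
    exact this.trans ((hA x hx).trans (le_abs_self A))
  refine ⟨fun i => ?_, fun i j => ?_, ?_⟩
  · linarith [hA' i, abs_nonneg A, abs_nonneg B]
  · rw [hess2_eq (hu x hx)]
    have := (fderiv ℝ (fderiv ℝ u) x).le_opNorm₂ (e2 i) (e2 j)
    rw [n1, n1, mul_one, mul_one, Real.norm_eq_abs] at this
    linarith [hB x hx, le_abs_self B, abs_nonneg A]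
  · have h0 := hA' 0
    have h1 := hA' 1
    refine (Real.sqrt_le_sqrt (y := (|A| + |A| + 1) ^ 2) ?_).trans ?_
    · have h0' := sq_le_sq' (neg_le_of_abs_le h0) (le_of_abs_le h0)
      have h1' := sq_le_sq' (neg_le_of_abs_le h1) (le_of_abs_le h1)
      nlinarith [abs_nonneg A]
    · rw [Real.sqrt_sq (by positivity)]
      linarith [abs_nonneg B]

/-- The algebra of the comparison principle. Here `p = (p₀, p₁)` and `(q₀, p₁)` stand for the two
gradients, `W` and `W'` for the two area elements, and `r, s, s', t` for the Hessian entries of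
the first function. -/
theorem first_order_bound {H M δ γ p₀ q₀ p₁ r s s' t W W' : ℝ} (hδ : 0 < δ) (hM : 0 ≤ M)
    (hp₁ : |p₁| ≤ M) (hp₀ : |p₀| ≤ M) (hq₀ : |q₀| ≤ M) (hs : |s| ≤ M) (hs' : |s'| ≤ M)
    (ht : |t| ≤ M) (hWM : W ≤ M) (hWM' : W' ≤ M) (hW : 0 < W) (hW' : 0 < W')
    (hWW : |W' - W| ≤ δ) (hq : q₀ = p₀ - δ)
    (heq : 2 * H * W ^ 3 = r + t + (p₁ ^ 2 * r - p₀ * p₁ * (s + s') + p₀ ^ 2 * t))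
    (hle : 2 * H * W' ^ 3 ≤
      r + t + (p₁ ^ 2 * r - q₀ * p₁ * (s + s') + q₀ ^ 2 * t) - γ * δ) :
    γ ≤ 4 * M ^ 2 + 6 * |H| * M ^ 2 := by
  have t1 : |p₁ * (s + s') - (q₀ + p₀) * t| ≤ 4 * M ^ 2 := by
    have h1 := mul_le_mul hp₁ ((abs_add_le _ _).trans (add_le_add hs hs')) (abs_nonneg _) hM
    have h2 := mul_le_mul ((abs_add_le _ _).trans (add_le_add hq₀ hp₀)) ht (abs_nonneg _)
      (by linarith)
    rw [← abs_mul] at h1 h2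
    refine (abs_sub _ _).trans ?_
    linarith
  have t2 : |2 * H * (W ^ 3 - W' ^ 3)| ≤ 6 * |H| * M ^ 2 * δ := by
    have hfac : 2 * H * (W ^ 3 - W' ^ 3) =
        2 * H * -(W' - W) * (W' ^ 2 + W' * W + W ^ 2) := by ring
    have hsum : W' ^ 2 + W' * W + W ^ 2 ≤ 3 * M ^ 2 := by
      nlinarith
    rw [hfac, abs_mul, abs_mul, abs_mul, abs_neg, abs_two,
      abs_of_pos (a := _ + _ + _) (by positivity)]
    calc 2 * |H| * |W' - W| * (W' ^ 2 + W' * W + W ^ 2)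
        ≤ 2 * |H| * δ * (3 * M ^ 2) := by gcongr
      _ = _ := by ring
  have t1' := mul_le_mul_of_nonneg_left (le_of_abs_le t1) hδ.le
  have t2' := le_of_abs_le t2
  refine le_of_mul_le_mul_right ?_ hδ
  subst hq
  linarith

/-- Comparison principle. The gradient of a solution may blow up at `∂Ω`, so the coefficients
of the linearised equation are bounded only on the compact set `{u' - u ≥ m/2} ⊆ Ω`; the
perturbation `ε exp(γ x₀)` is taken small enough for the maximum to stay in that set. -/
theorem comparison {Ω : Set E2} (hΩ : IsOpen Ω) (hb : Bornology.IsBounded Ω) {H H' : ℝ}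
    (hle : H ≤ H') {u u' : E2 → ℝ} (hu : SolvesStar Ω H u) (hu' : SolvesStar Ω H' u') :
    ∀ x ∈ Ω, u' x ≤ u x := by
  intro z hz
  by_contra! hlt
  set m := u' z - u z with hm
  have hmpos : 0 < m := sub_pos.2 hlt
  have hcpt : IsCompact (closure Ω) := hb.isCompact_closure
  have hw : ContinuousOn (fun y => u' y - u y) (closure Ω) := hu'.2.1.sub hu.2.1
  set K := closure Ω ∩ (fun y => u' y - u y) ⁻¹' Ici (m / 2) with hKdef
  have hK : IsCompact K :=
    hcpt.of_isClosed_subset (hw.preimage_isClosed_of_isClosed isClosed_closure isClosed_Ici)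
      inter_subset_left
  have hKΩ : K ⊆ Ω := by
    rintro y ⟨hy, hy2⟩
    by_contra hyn
    have hf : y ∈ frontier Ω := by rw [hΩ.frontier_eq]; exact ⟨hy, hyn⟩
    have h1 := hu.2.2.2 y hf
    have h2 := hu'.2.2.2 y hf
    simp only [mem_preimage, mem_Ici, h1, h2] at hy2
    linarith
  obtain ⟨M₁, hM₁⟩ := exists_bound hK fun x hx => contDiffAt_of_solves hΩ hu (hKΩ hx)
  obtain ⟨M₂, hM₂⟩ := exists_bound hK fun x hx => contDiffAt_of_solves hΩ hu' (hKΩ hx)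
  set M := |M₁| + |M₂| with hMdef
  have hM0 : 0 ≤ M := by positivity
  have hM1 : M₁ ≤ M := by linarith [le_abs_self M₁, abs_nonneg M₂]
  have hM2 : M₂ ≤ M := by linarith [le_abs_self M₂, abs_nonneg M₁]
  -- `γ` exceeds the Lipschitz constant, on `K`, of the first-order terms of the equation
  set γ := 4 * M ^ 2 + 6 * |H| * M ^ 2 + 1 with hγ
  have hγpos : 0 < γ := by positivity
  have hexp : Continuous (fun y : E2 => Real.exp (γ * y 0)) := by fun_prop
  obtain ⟨B, hB⟩ := hcpt.exists_bound_of_continuousOn hexp.continuousOn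
  set ε := m / (2 * (|B| + 1)) with hε
  have hεpos : 0 < ε := by positivity
  have hεB : ε * |B| ≤ m / 2 := by
    rw [hε, div_mul_eq_mul_div, div_le_div_iff₀ (by positivity) (by norm_num)]
    nlinarith [abs_nonneg B]
  obtain ⟨x, hx, hxmax⟩ := hcpt.exists_isMaxOn ⟨z, subset_closure hz⟩
    (hw.add (hexp.const_mul ε).continuousOn)
  have hxK : x ∈ K := by
    refine ⟨hx, ?_⟩
    have h1 : u' z - u z + ε * Real.exp (γ * z 0) ≤ u' x - u x + ε * Real.exp (γ * x 0) :=
      hxmax (subset_closure hz)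
    have h2 : Real.exp (γ * x 0) ≤ |B| :=
      (le_abs_self _).trans ((hB x hx).trans (le_abs_self B))
    have h3 := mul_le_mul_of_nonneg_left h2 hεpos.le
    have h4 : 0 < ε * Real.exp (γ * z 0) := by positivity
    simp only [mem_preimage, mem_Ici]
    linarith
  have hxΩ := hKΩ hxK
  have hcu := contDiffAt_of_solves hΩ hu hxΩ
  have hcu' := contDiffAt_of_solves hΩ hu' hxΩ
  have hloc : IsLocalMax (fun y : E2 => u' y - u y + ε * Real.exp (γ * y 0)) x :=
    hxmax.isLocalMax (Filter.mem_of_superset (hΩ.mem_nhds hxΩ) subset_closure)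
  obtain ⟨g0, g1, hmain⟩ := max_elliptic hcu hcu' hεpos.le hloc
  have hequ := mcDiv_mul hcu
  rw [hu.2.2.1 x hxΩ] at hequ
  rw [hu'.2.2.1 x hxΩ] at hmain
  set δ := ε * γ * Real.exp (γ * x 0) with hδ
  have hδpos : 0 < δ := by positivity
  have hW := areaW_sub_le hδpos.le g0 g1
  obtain ⟨b1, b2, b3⟩ := hM₁ x hxK
  obtain ⟨b1', b2', b3'⟩ := hM₂ x hxK
  have hWp := areaW_pos u x
  have hWp' := areaW_pos u' x
  have hmono : 2 * H * areaW u' x ^ 3 ≤ 2 * H' * areaW u' x ^ 3 := by gcongr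
  have hp1 := (b1 1).trans hM1
  have hp0 := (b1 0).trans hM1
  have hp0' := (b1' 0).trans hM2
  have hS01 := (b2 0 1).trans hM1
  have hS10 := (b2 1 0).trans hM1
  have hS11 := (b2 1 1).trans hM1
  have hWM := b3.trans hM1
  have hWM' := b3'.trans hM2
  rw [g1] at hmain
  exact absurd (first_order_bound hδpos hM0 hp1 hp0 hp0' hS01 hS10 hS11 hWM hWM' hWp hWp' hW g0
    hequ (hmono.trans hmain)) (by rw [hγ]; linarith)

/-! ### Touching solutions and reflection -/

/-- A touching point in `Ω` of ordered solutions is a maximum of `u' - u`, where the gradients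
agree and the Hessians are ordered; this forces `H' ≤ H`. -/
theorem touching {Ω : Set E2} (hΩ : IsOpen Ω) {H H' : ℝ} {u u' : E2 → ℝ}
    (hu : SolvesStar Ω H u) (hu' : SolvesStar Ω H' u') (hcomp : ∀ x ∈ Ω, u' x ≤ u x)
    {x : E2} (hx : x ∈ Ω) (heq : u x = u' x) : H' ≤ H := by
  have hcu := contDiffAt_of_solves hΩ hu hx
  have hcu' := contDiffAt_of_solves hΩ hu' hx
  have hloc : IsLocalMax (fun y : E2 => u' y - u y + 0 * Real.exp (0 * y 0)) x := by
    filter_upwards [hΩ.mem_nhds hx] with y hy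
    have := hcomp y hy
    linarith
  obtain ⟨g0, g1, hmain⟩ := max_elliptic hcu hcu' le_rfl hloc
  simp only [zero_mul, mul_zero, sub_zero] at g0 hmain
  have hW : areaW u' x = areaW u x := by simp only [areaW, g0, g1]
  rw [g0, g1, ← mcDiv_mul hcu, hW, hu.2.2.1 x hx, hu'.2.2.1 x hx] at hmain
  have := le_of_mul_le_mul_right hmain (pow_pos (areaW_pos u x) 3)
  linarith

theorem SolvesStar.neg {Ω : Set E2} {K : ℝ} {w : E2 → ℝ}
    (hw : SolvesStar Ω K w) : SolvesStar Ω (-K) (fun x => -w x) := by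
  refine ⟨hw.1.neg, hw.2.1.neg, fun x hx => ?_, fun x hx => by simp [hw.2.2.2 x hx]⟩
  have hg : ∀ y, gradient (fun x => -w x) y = -gradient w y := fun y => by
    simp [gradient, fderiv_fun_neg]
  have h := hw.2.2.1 x hx
  simp only [mcDiv, hg, norm_neg, smul_neg, fderiv_fun_neg] at h ⊢
  simp only [Fin.sum_univ_two, neg_apply, PiLp.neg_apply] at h ⊢
  linarith

/-- **Monotonicity and symmetry, Corollary 1.**  If
`−H_max < H ≤ H' < H_max`, the corresponding solutions of (*) satisfy `u(x;H) ≥ u(x;H')`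
on `Ω`, with equality somewhere in `Ω` only when `H = H'`; moreover the family of solutions
is odd in `H`: `u(x;−K) = −u(x;K)` whenever `|K| ≤ H_max`. -/
theorem monotonicity_and_symmetry (α : ℝ) (hα : 0 < α) (hα1 : α ≤ 1)
    (Ω : Set E2) (hΩ : StrictlyConvexDomain α Ω)
    (H H' : ℝ) (hlow : -(Hmax Ω) < H) (hle : H ≤ H') (hup : H' < Hmax Ω)
    (u u' : E2 → ℝ) (hu : SolvesStar Ω H u) (hu' : SolvesStar Ω H' u') :
    (∀ x ∈ Ω, u' x ≤ u x) ∧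
    ((∃ x ∈ Ω, u x = u' x) → H = H') ∧
    (∀ K : ℝ, |K| ≤ Hmax Ω → ∀ w w' : E2 → ℝ,
      SolvesStar Ω K w → SolvesStar Ω (-K) w' → ∀ x ∈ Ω, w' x = - w x) := by
  obtain ⟨ho, hb, -⟩ := hΩ
  have hcomp := comparison ho hb hle hu hu'
  refine ⟨hcomp, ?_, ?_⟩
  · rintro ⟨x, hx, heq⟩
    exact le_antisymm hle (touching ho hu hu' hcomp hx heq)
  · intro K _ w w' hw hw' x hx
    exact le_antisymm (comparison ho hb le_rfl hw.neg hw' x hx)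
      (comparison ho hb le_rfl hw' hw.neg x hx)
end
end

section
/- Let Ω ⊂ ℝⁿ be a bounded open set, H a constant, and u ∈ C²(Ω) ∩ C¹(closure Ω) a function satisfying div(Du/√(1+|Du|²)) = 2H in Ω. Let v ∈ C¹(closure Ω) be any function with v = u on ∂Ω such that the difference h = v − u is admissible for integration by parts (e.g. h is compactly supported in Ω), and suppose v encloses the same volume: ∫_Ω v = ∫_Ω u. Then the graph of u has the least area: ∫_Ω √(1+|Dv|²) ≥ ∫_Ω √(1+|Du|²). -/
/-!
The area integrand `q ↦ √(1+|q|²)` is convex, so at each point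
`√(1+|Dv|²) ≥ √(1+|Du|²) + ⟪F, Dh⟫` with `F = Du/√(1+|Du|²)` and `h = v − u`
(`sqrt_one_add_norm_sq_ge`). Since `h F` is a `C¹` field with compact support in `Ω`, the
divergence theorem gives `0 = ∫ div (h F) = ∫_Ω ⟪F, Dh⟫ + ∫_Ω h div F`
(`integral_sum_fderiv_eq_zero`, `sum_fderiv_smul`), and `∫_Ω h div F = 2H ∫_Ω h = 0` by the
volume constraint. Integrating the pointwise inequality gives the claim.

Integrability of `√(1+|Du|²)` costs nothing: if it fails, the left-hand integral is `0` by
convention; if it holds, `√(1+|Dv|²) ≤ √(1+|Du|²) + |Dh|` with `Dh` continuous and compactly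
supported.
-/

noncomputable section
open Set
open scoped RealInnerProductSpace

/-- Euclidean space ℝⁿ. -/
abbrev En (n : ℕ) : Type := EuclideanSpace ℝ (Fin n)

/-- The mean curvature operator `M u = div (Du / √(1+|Du|²))` in ℝⁿ. -/
def mcDivN {n : ℕ} (u : En n → ℝ) (x : En n) : ℝ :=
  ∑ i : Fin n,
    fderiv ℝ (fun y => (Real.sqrt (1 + ‖gradient u y‖ ^ 2))⁻¹ • gradient u y) x
      (EuclideanSpace.single i 1) i

open MeasureTheory

/-- The tangent-plane inequality for the convex function `q ↦ √(1+|q|²)`, at `p` in direction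
`w`. -/
lemma sqrt_one_add_norm_sq_ge {n : ℕ} (p w : En n) :
    Real.sqrt (1 + ‖p‖ ^ 2) + ⟪w, (Real.sqrt (1 + ‖p‖ ^ 2))⁻¹ • p⟫ ≤
      Real.sqrt (1 + ‖p + w‖ ^ 2) := by
  have ha : 0 < Real.sqrt (1 + ‖p‖ ^ 2) := Real.sqrt_pos.2 (by positivity)
  have ha2 : Real.sqrt (1 + ‖p‖ ^ 2) ^ 2 = 1 + ‖p‖ ^ 2 := Real.sq_sqrt (by positivity)
  set a := Real.sqrt (1 + ‖p‖ ^ 2)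
  have hcs : ⟪w, p⟫ ^ 2 ≤ ‖w‖ ^ 2 * ‖p‖ ^ 2 := by
    rw [← mul_pow]
    exact sq_le_sq' (by linarith [neg_abs_le ⟪w, p⟫, abs_real_inner_le_norm w p])
      (real_inner_le_norm w p)
  rw [inner_smul_right]
  apply Real.le_sqrt_of_sq_le
  rw [norm_add_sq_real, real_inner_comm w p]
  have key : (a⁻¹ * ⟪w, p⟫) ^ 2 ≤ ‖w‖ ^ 2 := by
    rw [mul_pow, inv_pow, ha2, inv_mul_le_iff₀ (by positivity)]
    nlinarith [sq_nonneg ‖w‖]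
  have e : a * (a⁻¹ * ⟪w, p⟫) = ⟪w, p⟫ := by field_simp
  nlinarith

lemma sqrt_one_add_norm_sq_add_le {n : ℕ} (p w : En n) :
    Real.sqrt (1 + ‖p + w‖ ^ 2) ≤ Real.sqrt (1 + ‖p‖ ^ 2) + ‖w‖ := by
  have ha2 : Real.sqrt (1 + ‖p‖ ^ 2) ^ 2 = 1 + ‖p‖ ^ 2 := Real.sq_sqrt (by positivity)
  have hp : ‖p‖ ≤ Real.sqrt (1 + ‖p‖ ^ 2) := Real.le_sqrt_of_sq_le (by linarith)
  apply Real.sqrt_le_iff.2 ⟨by positivity, ?_⟩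
  have h1 : ‖p + w‖ ^ 2 ≤ (‖p‖ + ‖w‖) ^ 2 := by gcongr; exact norm_add_le p w
  nlinarith [norm_nonneg w, norm_nonneg p, mul_le_mul_of_nonneg_right hp (norm_nonneg w)]

/-- The divergence theorem for a compactly supported `C¹` vector field. -/
lemma integral_sum_fderiv_eq_zero {n : ℕ} {G : En n → En n} (hG : ContDiff ℝ 1 G)
    (hc : HasCompactSupport G) :
    ∫ x, ∑ i : Fin n, fderiv ℝ G x (EuclideanSpace.single i 1) i = 0 := by
  have hcont (w : En n) (i : Fin n) : Continuous fun x => fderiv ℝ G x w i := by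
    have := (hG.continuous_fderiv one_ne_zero).clm_apply (continuous_const (y := w))
    fun_prop
  have hint (w : En n) (i : Fin n) : Integrable fun x => fderiv ℝ G x w i :=
    (hcont w i).integrable_of_hasCompactSupport
      (hc.fderiv (𝕜 := ℝ) |>.comp_left (g := fun L : En n →L[ℝ] En n => L w i) (by simp))
  rw [integral_finsetSum _ fun i _ => hint _ i]
  refine Finset.sum_eq_zero fun i _ => ?_
  set e : En n := EuclideanSpace.single i 1
  have hd (x) : fderiv ℝ (fun y => G y i) x e = fderiv ℝ G x e i := by
    have h1 := ((EuclideanSpace.proj (𝕜 := ℝ) i).hasFDerivAt (x := G x)).comp x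
      ((hG.differentiable one_ne_zero) x).hasFDerivAt
    exact congrArg (fun L => L e) h1.fderiv
  have hGi : Integrable fun x => G x i :=
    Continuous.integrable_of_hasCompactSupport (by have := hG.continuous; fun_prop)
      (hc.comp_left (g := fun y : En n => y i) rfl)
  -- integration by parts of the `i`-th component against the constant function `1`
  have := integral_mul_fderiv_eq_neg_fderiv_mul_of_integrable (μ := (volume : Measure (En n)))
    (f := fun _ : En n => (1 : ℝ)) (g := fun x => G x i) (v := e)
    (by simp) (by simpa [hd] using hint e i) (by simpa using hGi)
    (fun x _ => by fun_prop)
    (fun x _ => by have := (hG.differentiable one_ne_zero) x; fun_prop)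
  simpa [hd] using this

/-- The product rule `div (h F) = h div F + ⟪Dh, F⟫`. -/
lemma sum_fderiv_smul {n : ℕ} {h : En n → ℝ} {F : En n → En n} {x : En n}
    (hh : DifferentiableAt ℝ h x) (hF : DifferentiableAt ℝ F x) :
    ∑ i : Fin n, fderiv ℝ (fun y => h y • F y) x (EuclideanSpace.single i 1) i =
      h x * ∑ i : Fin n, fderiv ℝ F x (EuclideanSpace.single i 1) i + ⟪gradient h x, F x⟫ := by
  have hin : ⟪gradient h x, F x⟫ =
      ∑ i : Fin n, fderiv ℝ h x (EuclideanSpace.single i 1) * F x i := by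
    have h1 : ⟪gradient h x, F x⟫ = fderiv ℝ h x (F x) := by
      rw [← toDual_gradient]; rfl
    have h2 : F x = ∑ i : Fin n, F x i • (EuclideanSpace.single i 1 : En n) := by
      have := (EuclideanSpace.basisFun (Fin n) ℝ).sum_repr (F x)
      simpa using this.symm
    rw [h1]
    conv_lhs => rw [h2]
    simp [map_sum, mul_comm]
  rw [hin, Finset.mul_sum, ← Finset.sum_add_distrib]
  refine Finset.sum_congr rfl fun i _ => ?_
  rw [fderiv_fun_smul hh hF]
  simp

lemma contDiffOn_normalized_gradient {n : ℕ} {Ω : Set (En n)} (hopen : IsOpen Ω)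
    {u : En n → ℝ} (hu2 : ContDiffOn ℝ 2 u Ω) :
    ContDiffOn ℝ 1 (fun y => (Real.sqrt (1 + ‖gradient u y‖ ^ 2))⁻¹ • gradient u y) Ω := by
  have hg : ContDiffOn ℝ 1 (gradient u) Ω :=
    (InnerProductSpace.toDual ℝ (En n)).symm.contDiff.comp_contDiffOn
      (hu2.fderiv_of_isOpen hopen (by norm_num))
  have hpos (y) : 1 + ‖gradient u y‖ ^ 2 ≠ 0 := by positivity
  refine ContDiffOn.smul (ContDiffOn.inv (ContDiffOn.sqrt ?_ fun y _ => hpos y) ?_) hg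
  · exact contDiffOn_const.add (hg.norm_sq ℝ)
  · intro y _
    exact ne_of_gt (Real.sqrt_pos.2 (by positivity))

/-- A function that is `C¹` on an open set containing its topological support is `C¹`. -/
lemma contDiff_of_tsupport_subset {n : ℕ} {E : Type*} [NormedAddCommGroup E] [NormedSpace ℝ E]
    {Ω : Set (En n)} (hopen : IsOpen Ω) {f : En n → E} (hf : ContDiffOn ℝ 1 f Ω)
    (hs : tsupport f ⊆ Ω) : ContDiff ℝ 1 f := by
  refine contDiff_iff_contDiffAt.2 fun x => ?_
  by_cases hx : x ∈ Ω
  · exact hf.contDiffAt (hopen.mem_nhds hx)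
  · have h0 := notMem_tsupport_iff_eventuallyEq.1 fun hx' => hx (hs hx')
    exact (contDiffAt_const (c := (0 : E))).congr_of_eventuallyEq h0

/-- **H-graphs minimize area for fixed volume.**  Let `u ∈ C²(Ω) ∩ C¹(closure Ω)`
satisfy `div(Du/√(1+|Du|²)) = 2H` on a bounded open `Ω ⊂ ℝⁿ`.  If `v ∈ C¹(closure Ω)` agrees
with `u` on `∂Ω`, the difference `v − u` is compactly supported in `Ω`, and `v` encloses the
same volume (`∫_Ω v = ∫_Ω u`), then `∫_Ω √(1+|Dv|²) ≥ ∫_Ω √(1+|Du|²)`. -/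
theorem H_graph_minimizes_area (n : ℕ) (Ω : Set (En n))
    (hopen : IsOpen Ω) (hbd : Bornology.IsBounded Ω)
    (H : ℝ) (u v : En n → ℝ)
    (hu2 : ContDiffOn ℝ 2 u Ω) (hu1 : ContDiffOn ℝ 1 u (closure Ω))
    (heq : ∀ x ∈ Ω, mcDivN u x = 2 * H)
    (hv1 : ContDiffOn ℝ 1 v (closure Ω))
    (hbdry : ∀ x ∈ frontier Ω, v x = u x)
    (hsupp : tsupport (fun x => v x - u x) ⊆ Ω)
    (hvol : (∫ x in Ω, v x) = ∫ x in Ω, u x) :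
    (∫ x in Ω, Real.sqrt (1 + ‖gradient u x‖ ^ 2)) ≤
      ∫ x in Ω, Real.sqrt (1 + ‖gradient v x‖ ^ 2) := by
  by_cases hAu : IntegrableOn (fun x => Real.sqrt (1 + ‖gradient u x‖ ^ 2)) Ω
  swap
  · rw [integral_undef hAu]
    exact integral_nonneg fun x => Real.sqrt_nonneg _
  set h : En n → ℝ := fun x => v x - u x with hh
  set F : En n → En n := fun y => (Real.sqrt (1 + ‖gradient u y‖ ^ 2))⁻¹ • gradient u y with hFdef
  have hcl : IsCompact (closure Ω) := hbd.isCompact_closure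
  have hhc : HasCompactSupport h :=
    hcl.of_isClosed_subset (isClosed_tsupport _) (hsupp.trans subset_closure)
  have hhΩ : ContDiffOn ℝ 1 h Ω := (hv1.mono subset_closure).sub (hu1.mono subset_closure)
  have hh1 : ContDiff ℝ 1 h := contDiff_of_tsupport_subset hopen hhΩ hsupp
  have hF1 : ContDiffOn ℝ 1 F Ω := contDiffOn_normalized_gradient hopen hu2
  have hGs : tsupport (fun x => h x • F x) ⊆ tsupport h :=
    closure_mono (Function.support_smul_subset_left h F)
  have hG1 : ContDiff ℝ 1 (fun x => h x • F x) :=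
    contDiff_of_tsupport_subset hopen (hhΩ.smul hF1) (hGs.trans hsupp)
  have hGc : HasCompactSupport (fun x => h x • F x) :=
    hhc.of_isClosed_subset (isClosed_tsupport _) hGs
  have hgh_cont : Continuous (gradient h) :=
    (InnerProductSpace.toDual ℝ (En n)).symm.continuous.comp
      (hh1.continuous_fderiv one_ne_zero)
  have hgh_int : Integrable (gradient h) :=
    hgh_cont.integrable_of_hasCompactSupport
      (hhc.fderiv (𝕜 := ℝ) |>.comp_left
        (g := (InnerProductSpace.toDual ℝ (En n)).symm) (map_zero _))
  have hgrad : ∀ x ∈ Ω, gradient v x = gradient u x + gradient h x := by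
    intro x hx
    have hud : DifferentiableAt ℝ u x :=
      (hu2.contDiffAt (hopen.mem_nhds hx)).differentiableAt two_ne_zero
    have hvd : DifferentiableAt ℝ v x :=
      ((hv1.mono subset_closure).contDiffAt (hopen.mem_nhds hx)).differentiableAt one_ne_zero
    have : fderiv ℝ h x = fderiv ℝ v x - fderiv ℝ u x := fderiv_fun_sub hvd hud
    simp only [gradient, this, map_sub]
    abel
  have hmeas (w : En n → ℝ) : Measurable (gradient w) :=
    (InnerProductSpace.toDual ℝ (En n)).symm.continuous.measurable.comp (measurable_fderiv ℝ w)
  have hAv : IntegrableOn (fun x => Real.sqrt (1 + ‖gradient v x‖ ^ 2)) Ω := by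
    refine Integrable.mono' (hAu.add hgh_int.norm.integrableOn) ?_ ?_
    · have := hmeas v
      exact (by fun_prop : Measurable _).aestronglyMeasurable
    · filter_upwards [ae_restrict_mem hopen.measurableSet] with x hx
      rw [Real.norm_of_nonneg (Real.sqrt_nonneg _), hgrad x hx]
      exact sqrt_one_add_norm_sq_add_le _ _
  have hh0 : ∫ x in Ω, h x = 0 := by
    have hui : IntegrableOn u Ω :=
      (hu1.continuousOn.integrableOn_compact hcl).mono_set subset_closure
    have hvi : IntegrableOn v Ω :=
      (hv1.continuousOn.integrableOn_compact hcl).mono_set subset_closure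
    rw [hh, integral_sub hvi hui, hvol, sub_self]
  have hhi : IntegrableOn h Ω :=
    (hh1.continuous.integrable_of_hasCompactSupport hhc).integrableOn
  set D : En n → ℝ := fun x =>
    ∑ i : Fin n, fderiv ℝ (fun y => h y • F y) x (EuclideanSpace.single i 1) i with hD
  have hDΩ : ∀ x ∈ Ω, D x = h x * (2 * H) + ⟪gradient h x, F x⟫ := by
    intro x hx
    rw [← heq x hx]
    exact sum_fderiv_smul ((hh1.differentiable one_ne_zero) x)
      ((hF1.contDiffAt (hopen.mem_nhds hx)).differentiableAt one_ne_zero)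
  have hDi : Integrable D := by
    refine Continuous.integrable_of_hasCompactSupport ?_ ?_
    · refine continuous_finsetSum _ fun i _ => ?_
      have := (hG1.continuous_fderiv one_ne_zero).clm_apply
        (continuous_const (y := (EuclideanSpace.single i 1 : En n)))
      fun_prop
    · exact hGc.fderiv (𝕜 := ℝ) |>.comp_left
        (g := fun L : En n →L[ℝ] En n => ∑ i : Fin n, L (EuclideanSpace.single i 1) i) (by simp)
  have hD0 : ∫ x in Ω, D x = 0 := by
    rw [setIntegral_eq_integral_of_forall_compl_eq_zero]
    · exact integral_sum_fderiv_eq_zero hG1 hGc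
    · intro x hx
      have : fderiv ℝ (fun y => h y • F y) x = 0 := by
        by_contra hne
        exact hx (hsupp (hGs (support_fderiv_subset ℝ hne)))
      simp [hD, this]
  have hdiff : IntegrableOn (fun x => D x - h x * (2 * H)) Ω :=
    hDi.integrableOn.sub (hhi.mul_const _)
  have hlow : ∫ x in Ω, (Real.sqrt (1 + ‖gradient u x‖ ^ 2) + (D x - h x * (2 * H))) =
      ∫ x in Ω, Real.sqrt (1 + ‖gradient u x‖ ^ 2) := by
    rw [integral_add hAu hdiff,
      integral_sub hDi.integrableOn (hhi.mul_const _), integral_mul_const, hh0, hD0]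
    simp
  rw [← hlow]
  refine setIntegral_mono_on (hAu.add hdiff) hAv
    hopen.measurableSet fun x hx => ?_
  rw [hgrad x hx, hDΩ x hx, add_sub_cancel_left]
  exact sqrt_one_add_norm_sq_ge _ _
end
end

section
/- Let Ω ⊂ ℝ² be a bounded strictly convex domain (curvature of ∂Ω everywhere positive) and let u ∈ C²(closure Ω) be any positive function on Ω with u = 0 on ∂Ω and |Du| > 0 on ∂Ω, such that for every direction e_θ = (cos θ, sin θ): (i) N_θ = {x ∈ closure Ω : Du(x)·e_θ = 0} is a smooth embedded curve in closure Ω, and (ii) M_θ = {x ∈ N_θ : D(Du·e_θ)(x) = 0} is empty. Then u has exactly one critical point in Ω. -/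
/-!
The maximum of `u` on `closure Ω` is positive, hence attained in `Ω`; this gives a critical point
`p`. By `M_θ = ∅` no functional `D(u_{e_θ})(p)` vanishes, so the Hessian at `p` is invertible and
the gradient is a local chart at `p`.

Suppose `q ≠ p` is another critical point. Every nodal arc `N_θ` contains both, and therefore a
unique sub-arc `A θ` from `p` to `q`. On `N_θ` the gradient is a multiple `S_θ` of
`(-sin θ, cos θ)`, so in the chart at `p` the set `N_θ` consists of `p` and two half-branches, told
apart by the sign of `S_θ`. The sub-arc `A θ` leaves `p` along exactly one of them, as two
half-branches on the same side of `p` in an arc would overlap. The sign selected is locally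
constant in `θ`: if `x` lies on `A θ₀` strictly between `p` and `q`, removing a neighbourhood `U`
of `x` separates `p` from `q` in `N_θ₀`, hence also in the nearby sets `N_θ`, so the connected set
`A θ` has to meet `U`. Hence the sign is constant on `ℝ`. But `N_{θ+π} = N_θ`, so
`A (θ + π) = A θ`, whereas `S_{θ+π} = -S_θ`: a contradiction.

The rotation argument is `zero_unique_of_nodal_arcs`, stated for a continuous map from a compact
Hausdorff space to the plane. Continuity of the gradient up to the boundary uses that `closure Ω`
has unique derivatives (`uniqueDiffOn_closure_of_defining`).
-/


noncomputable section
open Set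
open scoped RealInnerProductSpace

/-- `Ω` is a bounded strictly convex domain with `C²` boundary of everywhere positive
curvature (no Hölder condition). -/
def C2StrictlyConvexDomain (Ω : Set E2) : Prop :=
  IsOpen Ω ∧ Bornology.IsBounded Ω ∧ Ω.Nonempty ∧
    ∃ f : E2 → ℝ, ContDiff ℝ 2 f ∧ Ω = {x | f x < 0} ∧ frontier Ω = {x | f x = 0} ∧
      (∀ x ∈ frontier Ω, gradient f x ≠ 0) ∧
      (∀ x ∈ frontier Ω, ∀ w : E2, w ≠ 0 → ⟪w, gradient f x⟫ = (0:ℝ) →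
        0 < hess2 f x w w)

/-! ### Arcs in a Hausdorff space -/

section Arc

variable {X : Type*} [TopologicalSpace X] [T2Space X] {γ : unitInterval → X}

/-- The sub-arc between two points of an arc is contained in every connected subset of the arc
containing both points. -/
lemma subarc_subset_of_isPreconnected (hγ : Continuous γ) (hinj : Function.Injective γ)
    {s t : unitInterval} {C : Set X} (hC : IsPreconnected C) (hCr : C ⊆ range γ)
    (hs : γ s ∈ C) (ht : γ t ∈ C) : γ '' uIcc s t ⊆ C := by
  have h := (hC.preimage_of_isClosedMap hinj hγ.isClosedMap hCr).ordConnected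
  rintro _ ⟨r, hr, rfl⟩
  exact h.uIcc_subset hs ht hr

/-- Two connected subsets of an arc that have only the point `γ s` in common cannot both
continue from `γ s` in the direction of `γ t`. -/
lemma not_both_meet_subarc (hγ : Continuous γ) (hinj : Function.Injective γ)
    {s t : unitInterval} {C₁ C₂ : Set X} (hC₁ : IsPreconnected C₁) (hC₂ : IsPreconnected C₂)
    (hr₁ : C₁ ⊆ range γ) (hr₂ : C₂ ⊆ range γ) (hs₁ : γ s ∈ C₁) (hs₂ : γ s ∈ C₂)
    (hdisj : ∀ x ∈ C₁, x ∈ C₂ → x = γ s) {y₁ y₂ : X} (hy₁ : y₁ ∈ γ '' uIcc s t)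
    (hy₂ : y₂ ∈ γ '' uIcc s t) (hyC₁ : y₁ ∈ C₁) (hyC₂ : y₂ ∈ C₂) (hne₁ : y₁ ≠ γ s)
    (hne₂ : y₂ ≠ γ s) : False := by
  obtain ⟨r₁, h₁, rfl⟩ := hy₁
  obtain ⟨r₂, h₂, rfl⟩ := hy₂
  have hcases : r₁ ∈ uIcc s r₂ ∨ r₂ ∈ uIcc s r₁ := by
    simp only [mem_uIcc] at *
    grind
  rcases hcases with h | h
  · exact hne₁ (hdisj _ hyC₁
      (subarc_subset_of_isPreconnected hγ hinj hC₂ hr₂ hs₂ hyC₂ ⟨r₁, h, rfl⟩))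
  · exact hne₂ (hdisj _
      (subarc_subset_of_isPreconnected hγ hinj hC₁ hr₁ hs₁ hyC₁ ⟨r₂, h, rfl⟩) hyC₂)

/-- Removing a neighbourhood of a point between `γ s` and `γ t` disconnects the arc, and the two
remaining pieces have disjoint open neighbourhoods. -/
lemma exists_separation_of_mem_subarc (hγ : Continuous γ) (hinj : Function.Injective γ)
    {s t : unitInterval} {U : Set X} (hU : IsOpen U) {x : X} (hx : x ∈ γ '' uIcc s t)
    (hxU : x ∈ U) (hsU : γ s ∉ U) (htU : γ t ∉ U) :
    ∃ V₁ V₂ : Set X, IsOpen V₁ ∧ IsOpen V₂ ∧ Disjoint V₁ V₂ ∧ γ s ∈ V₁ ∧ γ t ∈ V₂ ∧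
      range γ ⊆ U ∪ (V₁ ∪ V₂) := by
  obtain ⟨r, hr, rfl⟩ := hx
  have hK₁ : IsCompact (γ '' Iic r \ U) := (isClosed_Iic.isCompact.image hγ).diff hU
  have hK₂ : IsCompact (γ '' Ici r \ U) := (isClosed_Ici.isCompact.image hγ).diff hU
  have hd : Disjoint (γ '' Iic r \ U) (γ '' Ici r \ U) := by
    rw [Set.disjoint_left]
    rintro _ ⟨⟨a, ha, rfl⟩, haU⟩ ⟨⟨b, hb, hab⟩, -⟩
    obtain rfl := hinj hab
    obtain rfl : b = r := le_antisymm ha hb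
    exact haU hxU
  obtain ⟨V₁, V₂, ho₁, ho₂, h₁, h₂, hV⟩ := SeparatedNhds.of_isCompact_isCompact hK₁ hK₂ hd
  have hcov : range γ ⊆ U ∪ (V₁ ∪ V₂) := by
    rintro _ ⟨a, rfl⟩
    by_cases haU : γ a ∈ U
    · exact Or.inl haU
    · rcases le_total a r with h | h
      · exact Or.inr (Or.inl (h₁ ⟨⟨a, h, rfl⟩, haU⟩))
      · exact Or.inr (Or.inr (h₂ ⟨⟨a, h, rfl⟩, haU⟩))
  rcases mem_uIcc.1 hr with h | h
  · exact ⟨V₁, V₂, ho₁, ho₂, hV, h₁ ⟨⟨s, h.1, rfl⟩, hsU⟩, h₂ ⟨⟨t, h.2, rfl⟩, htU⟩, hcov⟩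
  · exact ⟨V₂, V₁, ho₂, ho₁, hV.symm, h₂ ⟨⟨s, h.2, rfl⟩, hsU⟩, h₁ ⟨⟨t, h.1, rfl⟩, htU⟩,
      by rwa [union_comm V₂ V₁]⟩

end Arc

/-! ### The rotation argument -/

/-- Let `(a, b) : X → ℝ²` be a continuous map on a compact Hausdorff space such that the preimage
of every line through the origin is an arc. Then a zero `p` of `(a, b)` near which `(a, b)` is a
chart onto a convex set `D` (with inverse `g`) is the only zero. -/
lemma zero_unique_of_nodal_arcs {X : Type*} [TopologicalSpace X] [CompactSpace X] [T2Space X]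
    (a b : X → ℝ) (ha : Continuous a) (hb : Continuous b)
    (hN : ∀ θ : ℝ, ∃ γ : unitInterval → X, Continuous γ ∧ Function.Injective γ ∧
      range γ = {x | Real.cos θ * a x + Real.sin θ * b x = 0})
    (p q : X) (hpa : a p = 0) (hpb : b p = 0) (hqa : a q = 0) (hqb : b q = 0)
    (W : Set X) (hW : IsOpen W) (hpW : p ∈ W) (D : Set (ℝ × ℝ)) (hD : Convex ℝ D)
    (g : ℝ × ℝ → X) (hg : ContinuousOn g D)
    (hgD : ∀ z ∈ D, a (g z) = z.1 ∧ b (g z) = z.2)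
    (hgW : ∀ x ∈ W, (a x, b x) ∈ D ∧ g (a x, b x) = x) : p = q := by
  by_contra hpq
  choose γ hγ hinj hrange using hN
  have hp : ∀ θ, ∃ s, γ θ s = p := fun θ => by
    have : p ∈ range (γ θ) := by rw [hrange]; simp [hpa, hpb]
    exact this
  have hq : ∀ θ, ∃ t, γ θ t = q := fun θ => by
    have : q ∈ range (γ θ) := by rw [hrange]; simp [hqa, hqb]
    exact this
  choose s hs using hp
  choose t ht using hq
  -- `A θ` is the sub-arc of the nodal arc `N_θ` from `p` to `q`.
  set A : ℝ → Set X := fun θ => γ θ '' uIcc (s θ) (t θ) with hA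
  have hpA : ∀ θ, p ∈ A θ := fun θ => ⟨s θ, left_mem_uIcc, hs θ⟩
  have hqA : ∀ θ, q ∈ A θ := fun θ => ⟨t θ, right_mem_uIcc, ht θ⟩
  have hAc : ∀ θ, IsPreconnected (A θ) := fun θ =>
    isPreconnected_uIcc.image _ (hγ θ).continuousOn
  have hAr : ∀ θ, A θ ⊆ range (γ θ) := fun θ => image_subset_range _ _
  have hrπ : ∀ θ, range (γ (θ + Real.pi)) = range (γ θ) := fun θ => by
    rw [hrange, hrange]
    ext x
    simp only [Real.cos_add_pi, Real.sin_add_pi, mem_ofPred_eq]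
    constructor <;> intro h <;> linarith
  have hAπ : ∀ θ, A (θ + Real.pi) = A θ := fun θ => by
    apply Subset.antisymm
    · apply subarc_subset_of_isPreconnected (hγ _) (hinj _) (hAc θ)
      · rw [hrπ]; exact hAr θ
      · rw [hs]; exact hpA θ
      · rw [ht]; exact hqA θ
    · apply subarc_subset_of_isPreconnected (hγ _) (hinj _) (hAc (θ + Real.pi))
      · rw [← hrπ]; exact hAr _
      · rw [hs]; exact hpA _
      · rw [ht]; exact hqA _
  -- On `N_θ` the map `(a, b)` equals `S θ • (-sin θ, cos θ)`.
  set S : ℝ → X → ℝ := fun θ x => -Real.sin θ * a x + Real.cos θ * b x with hS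
  have hSp : ∀ θ, S θ p = 0 := fun θ => by simp [hS, hpa, hpb]
  have hSq : ∀ θ, S θ q = 0 := fun θ => by simp [hS, hqa, hqb]
  have hScont : Continuous fun z : ℝ × X => S z.1 z.2 := by
    simp only [hS]; fun_prop
  -- `P σ` collects the angles for which the sub-arc meets, inside the chart, the half-branch of
  -- sign `σ`.
  set P : ℝ → Set ℝ := fun σ => {θ | ∃ x ∈ A θ, x ∈ W ∧ 0 < σ * S θ x} with hP
  have hopen : ∀ σ, IsOpen (P σ) := fun σ => by
    rw [isOpen_iff_mem_nhds]
    rintro θ₀ ⟨x, hxA, hxW, hxS⟩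
    have hG : IsOpen {z : ℝ × X | z.2 ∈ W ∧ 0 < σ * S z.1 z.2} :=
      (hW.preimage continuous_snd).inter
        (isOpen_lt continuous_const (continuous_const.mul hScont))
    obtain ⟨T, U, hT, hU, hθT, hxU, hTU⟩ := isOpen_prod_iff.1 hG θ₀ x ⟨hxW, hxS⟩
    have hpU : p ∉ U := fun h => by
      have := (hTU (show (θ₀, p) ∈ T ×ˢ U from ⟨hθT, h⟩)).2
      simp [hSp] at this
    have hqU : q ∉ U := fun h => by
      have := (hTU (show (θ₀, q) ∈ T ×ˢ U from ⟨hθT, h⟩)).2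
      simp [hSq] at this
    obtain ⟨V₁, V₂, ho₁, ho₂, hV, hpV, hqV, hcov⟩ :=
      exists_separation_of_mem_subarc (hγ θ₀) (hinj θ₀) hU hxA hxU
        (by rwa [hs]) (by rwa [ht])
    rw [hs] at hpV
    rw [ht] at hqV
    -- By compactness `N_θ` stays in any neighbourhood of `N_θ₀` for `θ` close to `θ₀`.
    have hK : IsCompact (U ∪ (V₁ ∪ V₂))ᶜ :=
      (hU.union (ho₁.union ho₂)).isClosed_compl.isCompact
    have hev : ∀ᶠ θ in nhds θ₀, ∀ y ∈ (U ∪ (V₁ ∪ V₂))ᶜ,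
        Real.cos θ * a y + Real.sin θ * b y ≠ 0 := by
      apply hK.eventually_forall_of_forall_eventually
        (P := fun θ y => Real.cos θ * a y + Real.sin θ * b y ≠ 0)
      intro y hy
      have hc : Continuous fun z : ℝ × X => Real.cos z.1 * a z.2 + Real.sin z.1 * b z.2 := by
        fun_prop
      refine hc.continuousAt.eventually_ne ?_
      intro h0
      exact hy (hcov (by rw [hrange]; exact h0))
    filter_upwards [hev, hT.mem_nhds hθT] with θ hθ hθT'
    by_contra hno
    have hAU : ∀ y ∈ A θ, y ∉ U := fun y hyA hyU =>
      hno ⟨y, hyA, hTU (show (θ, y) ∈ T ×ˢ U from ⟨hθT', hyU⟩)⟩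
    have hAV : A θ ⊆ V₁ ∪ V₂ := fun y hyA => by
      by_contra hyV
      have h0 : Real.cos θ * a y + Real.sin θ * b y = 0 := by
        have := hAr θ hyA
        rwa [hrange] at this
      exact hθ y (fun h => h.elim (hAU y hyA) hyV) h0
    obtain ⟨y, -, hy₁, hy₂⟩ := hAc θ V₁ V₂ ho₁ ho₂ hAV ⟨p, hpA θ, hpV⟩ ⟨q, hqA θ, hqV⟩
    exact Set.disjoint_left.1 hV hy₁ hy₂
  -- A point of `N_θ ∩ W` is determined by the value of `S θ`; in particular `S θ` vanishes
  -- only at `p`.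
  have hWp : ∀ θ, ∀ x ∈ W, Real.cos θ * a x + Real.sin θ * b x = 0 → S θ x = 0 → x = p := by
    intro θ x hx h0 h1
    have hcs := Real.sin_sq_add_cos_sq θ
    have hax : a x = 0 := by
      simp only [hS] at h1
      linear_combination Real.cos θ * h0 - Real.sin θ * h1 - a x * hcs
    have hbx : b x = 0 := by
      simp only [hS] at h1
      linear_combination Real.sin θ * h0 + Real.cos θ * h1 - b x * hcs
    rw [← (hgW x hx).2, ← (hgW p hpW).2, hax, hbx, hpa, hpb]
  have hcover : ∀ θ, θ ∈ P 1 ∪ P (-1) := fun θ => by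
    by_contra hno
    have hno' : ∀ x ∈ A θ, x ∈ W → x = p := fun x hxA hxW => by
      have h0 : Real.cos θ * a x + Real.sin θ * b x = 0 := by
        have := hAr θ hxA
        rwa [hrange] at this
      apply hWp θ x hxW h0
      by_contra h1
      apply hno
      rcases lt_or_gt_of_ne h1 with h | h
      · exact Or.inr ⟨x, hxA, hxW, by linarith⟩
      · exact Or.inl ⟨x, hxA, hxW, by linarith⟩
    obtain ⟨y, hyA, hyW, hyp⟩ := hAc θ W {p}ᶜ hW isOpen_compl_singleton
      (fun x _ => by
        by_cases hx : x = p
        · left; rw [hx]; exact hpW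
        · right; exact hx)
      ⟨p, hpA θ, hpW⟩ ⟨q, hqA θ, fun h => hpq h.symm⟩
    exact hyp (hno' y hyA hyW)
  have hexcl : ∀ θ, θ ∈ P 1 → θ ∈ P (-1) → False := by
    rintro θ ⟨x, hxA, hxW, hxS⟩ ⟨y, hyA, hyW, hyS⟩
    -- The closed half-branches at `p` are the images of half-lines in the chart.
    set L : ℝ → Set (ℝ × ℝ) := fun σ => D ∩ {z | Real.cos θ * z.1 + Real.sin θ * z.2 = 0 ∧
      0 ≤ σ * (-Real.sin θ * z.1 + Real.cos θ * z.2)} with hL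
    have hLc : ∀ σ, Convex ℝ (L σ) := fun σ => by
      refine hD.inter ?_
      rintro z ⟨hz₁, hz₂⟩ w ⟨hw₁, hw₂⟩ m n hm hn -
      refine ⟨?_, ?_⟩
      · simp only [Prod.fst_add, Prod.smul_fst, Prod.snd_add, Prod.smul_snd, smul_eq_mul]
        linear_combination m * hz₁ + n * hw₁
      · simp only [Prod.fst_add, Prod.smul_fst, Prod.snd_add, Prod.smul_snd, smul_eq_mul]
        have h1 := mul_nonneg hm hz₂
        have h2 := mul_nonneg hn hw₂
        linarith
    have hLpre : ∀ σ, IsPreconnected (g '' L σ) := fun σ =>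
      (hLc σ).isPreconnected.image _ (hg.mono inter_subset_left)
    have hLr : ∀ σ, g '' L σ ⊆ range (γ θ) := by
      rintro σ _ ⟨z, ⟨hzD, hz, -⟩, rfl⟩
      rw [hrange, mem_ofPred_eq, (hgD z hzD).1, (hgD z hzD).2]
      exact hz
    have hmem : ∀ σ, ∀ x ∈ A θ, x ∈ W → 0 ≤ σ * S θ x → x ∈ g '' L σ := by
      intro σ x hxA hxW hxS
      refine ⟨(a x, b x), ⟨(hgW x hxW).1, ?_, hxS⟩, (hgW x hxW).2⟩
      have := hAr θ hxA
      rwa [hrange] at this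
    have hLp : ∀ σ, γ θ (s θ) ∈ g '' L σ := fun σ => by
      rw [hs]
      exact hmem σ p (hpA θ) hpW (by simp [hSp])
    have hne : ∀ σ x, 0 < σ * S θ x → x ≠ γ θ (s θ) := by
      rintro σ x h rfl
      rw [hs, hSp] at h
      simp at h
    refine not_both_meet_subarc (hγ θ) (hinj θ) (hLpre 1) (hLpre (-1)) (hLr 1) (hLr (-1))
      (hLp 1) (hLp (-1)) ?_ hxA hyA (hmem 1 x hxA hxW hxS.le) (hmem (-1) y hyA hyW hyS.le)
      (hne 1 x hxS) (hne (-1) y hyS)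
    rintro _ ⟨z, ⟨hzD, hz₁, hz₂⟩, rfl⟩ ⟨w, ⟨hwD, hw₁, hw₂⟩, hwz⟩
    have hwz' : w = z := by
      ext
      · rw [← (hgD w hwD).1, hwz, (hgD z hzD).1]
      · rw [← (hgD w hwD).2, hwz, (hgD z hzD).2]
    subst hwz'
    have h1 : -Real.sin θ * w.1 + Real.cos θ * w.2 = 0 := by linarith
    have hcs := Real.sin_sq_add_cos_sq θ
    have hw1 : w.1 = 0 := by
      linear_combination Real.cos θ * hw₁ - Real.sin θ * h1 - w.1 * hcs
    have hw2 : w.2 = 0 := by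
      linear_combination Real.sin θ * hw₁ + Real.cos θ * h1 - w.2 * hcs
    have hw : w = (a p, b p) := by
      ext
      · rw [hw1, hpa]
      · rw [hw2, hpb]
    rw [hs, hw, (hgW p hpW).2]
  -- `N_θ` and hence `A θ` has period `π`, while `S` changes sign.
  have hflip : ∀ σ θ, θ ∈ P σ → θ + Real.pi ∈ P (-σ) := by
    rintro σ θ ⟨x, hxA, hxW, hxS⟩
    refine ⟨x, by rw [hAπ]; exact hxA, hxW, ?_⟩
    simp only [hS, Real.sin_add_pi, Real.cos_add_pi] at hxS ⊢
    linarith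
  have hne : (P 1).Nonempty ∧ (P (-1)).Nonempty := by
    rcases hcover 0 with h | h
    · exact ⟨⟨_, h⟩, ⟨_, hflip _ _ h⟩⟩
    · refine ⟨⟨0 + Real.pi, ?_⟩, ⟨_, h⟩⟩
      have := hflip _ _ h
      rwa [neg_neg] at this
  obtain ⟨θ, -, h₁, h₂⟩ := isPreconnected_univ (P 1) (P (-1)) (hopen 1) (hopen (-1))
    (fun θ _ => hcover θ) (by simpa using hne.1) (by simpa using hne.2)
  exact hexcl θ h₁ h₂

/-! ### The analytic input -/

/-- The closure of an open set with a regular defining function has unique derivatives: at a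
boundary point its tangent cone contains an open half-plane. -/
lemma uniqueDiffOn_closure_of_defining {Ω : Set E2} (hΩ : IsOpen Ω) {f : E2 → ℝ}
    (hf : Differentiable ℝ f) (hΩf : Ω = {x | f x < 0}) (hfr : frontier Ω = {x | f x = 0})
    (hgr : ∀ x ∈ frontier Ω, gradient f x ≠ 0) : UniqueDiffOn ℝ (closure Ω) := by
  intro x hx
  by_cases hxΩ : x ∈ Ω
  · exact uniqueDiffWithinAt_of_mem_nhds (Filter.mem_of_superset (hΩ.mem_nhds hxΩ) subset_closure)
  have hxfr : x ∈ frontier Ω := by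
    rw [hΩ.frontier_eq]; exact ⟨hx, hxΩ⟩
  have hfx : f x = 0 := by rw [hfr] at hxfr; exact hxfr
  have hgx : fderiv ℝ f x ≠ 0 := by
    intro h
    apply hgr x hxfr
    simp [gradient, h]
  have hcone : {v | fderiv ℝ f x v < 0} ⊆
      (Submodule.span ℝ (tangentConeAt ℝ (closure Ω) x) : Set E2) := by
    intro v hv
    have hline : HasDerivAt (fun t : ℝ => f (x + t • v)) (fderiv ℝ f x v) 0 :=
      ((hf x).hasFDerivAt.hasLineDerivAt v)
    have hev : ∀ᶠ t in nhdsWithin (0 : ℝ) (Ioi 0), f (x + t • v) < 0 := by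
      have h1 := (hasDerivAt_iff_tendsto_slope.1 hline).eventually_lt_const hv
      have h2 := h1.filter_mono (nhdsWithin_mono (0 : ℝ) (fun t (ht : 0 < t) => ne_of_gt ht))
      filter_upwards [h2, self_mem_nhdsWithin] with t ht ht0
      have ht0' : (0 : ℝ) < t := ht0
      rw [slope_def_field, div_neg_iff] at ht
      simp only [zero_smul, add_zero, hfx, sub_zero] at ht
      rcases ht with h | h
      · linarith [h.2]
      · exact h.1
    obtain ⟨δ, hδ, hδs⟩ := mem_nhdsGT_iff_exists_Ioo_subset.1 hev
    have hδ0 : (0 : ℝ) < δ := hδ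
    have hseg : openSegment ℝ x (x + δ • v) ⊆ closure Ω := by
      rw [openSegment_eq_image']
      rintro _ ⟨t, ht, rfl⟩
      apply subset_closure
      have : t * δ ∈ Ioo 0 δ := ⟨mul_pos ht.1 hδ0, by nlinarith [ht.2]⟩
      have := hδs this
      rw [hΩf]
      simpa [smul_smul] using this
    have hmem := mem_tangentConeAt_of_openSegment_subset hseg
    rw [add_sub_cancel_left] at hmem
    have := Submodule.smul_mem _ δ⁻¹ (Submodule.subset_span (R := ℝ) hmem)
    simpa [smul_smul, inv_mul_cancel₀ hδ0.ne'] using this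
  refine ⟨?_, subset_closure hx⟩
  have htop : Submodule.span ℝ (tangentConeAt ℝ (closure Ω) x) = ⊤ := by
    apply Submodule.eq_top_of_nonempty_interior'
    obtain ⟨v, hv⟩ : ∃ v, fderiv ℝ f x v ≠ 0 := by
      by_contra! h
      exact hgx (ContinuousLinearMap.ext h)
    have hopen : IsOpen {v | fderiv ℝ f x v < 0} :=
      isOpen_lt (fderiv ℝ f x).continuous continuous_const
    have hsub := interior_maximal hcone hopen
    rcases lt_or_gt_of_ne hv with h | h
    · exact ⟨v, hsub h⟩
    · exact ⟨-v, hsub (by simpa using h)⟩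
  rw [htop]
  simp

/-- If no combination `cos θ • A + sin θ • B` of two functionals vanishes, then `(A, B)` is an
isomorphism of the plane. -/
lemma exists_equiv_of_rotations_ne_zero (A B : E2 →L[ℝ] ℝ)
    (h : ∀ θ : ℝ, Real.cos θ • A + Real.sin θ • B ≠ 0) :
    ∃ L : E2 ≃L[ℝ] ℝ × ℝ, (L : E2 →L[ℝ] ℝ × ℝ) = A.prod B := by
  have hsurj : ((A.prod B : E2 →L[ℝ] ℝ × ℝ) : E2 →ₗ[ℝ] ℝ × ℝ).range = ⊤ := by
    by_contra hne
    obtain ⟨φ, hφ, hker⟩ := Submodule.exists_le_ker_of_lt_top _ (lt_top_iff_ne_top.2 hne)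
    set z : ℂ := ⟨φ (1, 0), φ (0, 1)⟩ with hz
    have hφz : ∀ w : ℝ × ℝ, φ w = w.1 * z.re + w.2 * z.im := fun w => by
      have : w = w.1 • ((1, 0) : ℝ × ℝ) + w.2 • ((0, 1) : ℝ × ℝ) := by ext <;> simp
      conv_lhs => rw [this, map_add, map_smul, map_smul]
      rfl
    have hz0 : ‖z‖ ≠ 0 := by
      intro h0
      rw [norm_eq_zero] at h0
      apply hφ
      ext <;> simp [hφz, h0]
    apply h z.arg
    ext v
    have hv : φ (A v, B v) = 0 := hker ⟨v, rfl⟩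
    rw [hφz] at hv
    have h1 := Complex.norm_mul_cos_arg z
    have h2 := Complex.norm_mul_sin_arg z
    have : ‖z‖ * (Real.cos z.arg * A v + Real.sin z.arg * B v) = 0 := by
      simp only at hv
      linear_combination hv + A v * h1 + B v * h2
    simpa [hz0] using this
  have hinj : ((A.prod B : E2 →L[ℝ] ℝ × ℝ) : E2 →ₗ[ℝ] ℝ × ℝ).ker = ⊥ := by
    rw [LinearMap.ker_eq_bot,
      LinearMap.injective_iff_surjective_of_finrank_eq_finrank (by simp)]
    exact LinearMap.range_eq_top.1 hsurj
  exact ⟨ContinuousLinearEquiv.ofBijective _ hinj hsurj,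
    ContinuousLinearEquiv.coe_ofBijective _ _ _⟩

/-- **Theorem 9, after Cabré–Chanillo.**  Let `u ∈ C²(closure Ω)` be positive
on the bounded strictly convex domain `Ω`, vanishing on `∂Ω` with nonvanishing boundary
gradient, and suppose that for every direction `e_θ` the nodal set
`N_θ = {x ∈ closure Ω : Du·e_θ = 0}` is a smooth embedded curve and
`M_θ = {x ∈ N_θ : D(Du·e_θ) = 0}` is empty.  Then `u` has a unique critical point in `Ω`. -/
theorem unique_critical_point (Ω : Set E2) (hΩ : C2StrictlyConvexDomain Ω)
    (u : E2 → ℝ) (hu : ContDiffOn ℝ 2 u (closure Ω))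
    (hpos : ∀ x ∈ Ω, 0 < u x) (hbd : ∀ x ∈ frontier Ω, u x = 0)
    (hgrad : ∀ x ∈ frontier Ω, fderivWithin ℝ u (closure Ω) x ≠ 0)
    (hN : ∀ θ : ℝ, ∃ γ : ℝ → E2, ContDiff ℝ 1 γ ∧ InjOn γ (Icc (0:ℝ) 1) ∧
      (∀ t ∈ Icc (0:ℝ) 1, deriv γ t ≠ 0) ∧
      γ '' Icc (0:ℝ) 1 =
        {x ∈ closure Ω | fderivWithin ℝ u (closure Ω) x (dirVec θ) = 0})
    (hM : ∀ θ : ℝ, ∀ x ∈ closure Ω, fderivWithin ℝ u (closure Ω) x (dirVec θ) = 0 →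
      fderivWithin ℝ (fun y => fderivWithin ℝ u (closure Ω) y (dirVec θ))
        (closure Ω) x ≠ 0) :
    ∃! x : E2, x ∈ Ω ∧ fderivWithin ℝ u (closure Ω) x = 0 := by
  obtain ⟨hO, hB, hne, f, hf, hΩf, hfr, hgr, -⟩ := hΩ
  have hK : IsCompact (closure Ω) := hB.isCompact_closure
  have hUD : UniqueDiffOn ℝ (closure Ω) :=
    uniqueDiffOn_closure_of_defining hO (hf.differentiable (by norm_num)) hΩf hfr hgr
  have hnhds : ∀ x ∈ Ω, closure Ω ∈ nhds x := fun x hx =>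
    Filter.mem_of_superset (hO.mem_nhds hx) subset_closure
  set du := fderivWithin ℝ u (closure Ω) with hdu
  have hduc : ContinuousOn du (closure Ω) := hu.continuousOn_fderivWithin hUD (by norm_num)
  have hdir : ∀ θ x, du x (dirVec θ) = Real.cos θ * du x (e2 0) + Real.sin θ * du x (e2 1) :=
    fun θ x => by simp [dirVec]
  obtain ⟨m, hm, hmax⟩ := hK.exists_isMaxOn hne.closure hu.continuousOn
  have hmΩ : m ∈ Ω := by
    by_contra hmΩ
    obtain ⟨x, hx⟩ := hne
    have h1 := hbd m (by rw [hO.frontier_eq]; exact ⟨hm, hmΩ⟩)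
    have h2 := hmax (subset_closure hx)
    have h3 := hpos x hx
    simp only [mem_ofPred_eq] at h2
    linarith
  have hm0 : du m = 0 := by
    rw [hdu, fderivWithin_of_mem_nhds (hnhds m hmΩ)]
    exact (hmax.isLocalMax (hnhds m hmΩ)).fderiv_eq_zero
  refine ⟨m, ⟨hmΩ, hm0⟩, ?_⟩
  rintro q ⟨hqΩ, hq0⟩
  -- The gradient map is differentiable at `m` with invertible derivative.
  have hstrict : ∀ v : E2, HasStrictFDerivAt (fun y => du y v)
      (fderiv ℝ (fun y => du y v) m) m := fun v => by
    have h1 : ContDiffAt ℝ 1 (fderiv ℝ u) m :=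
      (hu.contDiffAt (hnhds m hmΩ)).fderiv_right (by norm_num)
    have h2 : ContDiffAt ℝ 1 (fun y => fderiv ℝ u y v) m := h1.clm_apply contDiffAt_const
    have h3 : (fun y => du y v) =ᶠ[nhds m] fun y => fderiv ℝ u y v := by
      filter_upwards [hO.mem_nhds hmΩ] with y hy
      rw [hdu, fderivWithin_of_mem_nhds (hnhds y hy)]
    exact (h2.congr_of_eventuallyEq h3).hasStrictFDerivAt (by norm_num)
  obtain ⟨L, hL⟩ := exists_equiv_of_rotations_ne_zero
    (fderiv ℝ (fun y => du y (e2 0)) m) (fderiv ℝ (fun y => du y (e2 1)) m) (fun θ h => by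
      refine hM θ m hm (by rw [hm0]; rfl) ?_
      rw [fderivWithin_of_mem_nhds (hnhds m hmΩ), ← h]
      have hs := ((hstrict (e2 0)).hasFDerivAt.const_mul (Real.cos θ)).add
        ((hstrict (e2 1)).hasFDerivAt.const_mul (Real.sin θ))
      have hfun : (fun y => du y (dirVec θ)) =
          (fun y => Real.cos θ * du y (e2 0)) + fun y => Real.sin θ * du y (e2 1) := by
        funext y; simp [hdir]
      rw [hfun]
      exact hs.fderiv)
  have hF : HasStrictFDerivAt (fun y => (du y (e2 0), du y (e2 1))) (L : E2 →L[ℝ] ℝ × ℝ) m := by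
    rw [hL]
    exact (hstrict (e2 0)).prodMk (hstrict (e2 1))
  set Φ := hF.toOpenPartialHomeomorph _ with hΦ
  have hΦc : ∀ y, Φ y = (du y (e2 0), du y (e2 1)) := fun y => rfl
  have hmΦ : m ∈ Φ.source := hF.mem_toOpenPartialHomeomorph_source
  have hΦm : Φ m = 0 := by rw [hΦc, hm0]; rfl
  -- A ball around `0` on which the local inverse takes values in `Ω`.
  have htgt : Φ.target ∩ Φ.symm ⁻¹' Ω ∈ nhds (0 : ℝ × ℝ) := by
    rw [← hΦm]
    refine (Φ.isOpen_inter_preimage_symm hO).mem_nhds ⟨Φ.map_source hmΦ, ?_⟩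
    rw [mem_preimage, Φ.left_inv hmΦ]
    exact hmΩ
  obtain ⟨r, hr, hball⟩ := Metric.mem_nhds_iff.1 htgt
  have : CompactSpace (closure Ω) := isCompact_iff_compactSpace.1 hK
  have hcont : ∀ v : E2, Continuous fun x : closure Ω => du x v := fun v =>
    (hduc.clm_apply continuousOn_const).domRestrict
  -- Outside the ball the value of the inverse chart is irrelevant; `m` is used.
  classical
  let g : ℝ × ℝ → closure Ω := fun z =>
    if h : z ∈ Metric.ball (0 : ℝ × ℝ) r then ⟨Φ.symm z, subset_closure (hball h).2⟩ else ⟨m, hm⟩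
  have hgval : ∀ z ∈ Metric.ball (0 : ℝ × ℝ) r, (g z : E2) = Φ.symm z := fun z hz => by
    simp only [g, dif_pos hz]
  have key := zero_unique_of_nodal_arcs (X := closure Ω) (fun x => du x (e2 0))
    (fun x => du x (e2 1)) (hcont _) (hcont _) ?_ ⟨m, hm⟩ ⟨q, subset_closure hqΩ⟩
    (by simp [hm0]) (by simp [hm0]) (by simp [hq0]) (by simp [hq0])
    ((↑) ⁻¹' (Φ.source ∩ Φ ⁻¹' Metric.ball 0 r))
    ((Φ.isOpen_inter_preimage Metric.isOpen_ball).preimage continuous_subtype_val)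
    ⟨hmΦ, by rw [mem_preimage, hΦm]; exact Metric.mem_ball_self hr⟩
    (Metric.ball 0 r) (convex_ball _ _) g ?_ ?_ ?_
  · exact (congrArg Subtype.val key).symm
  · intro θ
    obtain ⟨γ, hγ, hinj, -, himg⟩ := hN θ
    have hmem : ∀ t : unitInterval, γ t ∈ closure Ω := fun t => by
      have : γ t ∈ γ '' Icc (0 : ℝ) 1 := ⟨t, t.2, rfl⟩
      rw [himg] at this
      exact this.1
    refine ⟨fun t => ⟨γ t, hmem t⟩, (hγ.continuous.comp continuous_subtype_val).subtype_mk _,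
      fun s t hst => Subtype.ext (hinj s.2 t.2 (congrArg Subtype.val hst)), ?_⟩
    ext x
    rw [mem_ofPred_eq, ← hdir]
    have hx : (x : E2) ∈ γ '' Icc (0 : ℝ) 1 ↔ du x (dirVec θ) = 0 := by
      rw [himg]
      exact ⟨fun h => h.2, fun h => ⟨x.2, h⟩⟩
    rw [← hx]
    constructor
    · rintro ⟨t, rfl⟩
      exact ⟨t, t.2, rfl⟩
    · rintro ⟨t, ht, hxt⟩
      exact ⟨⟨t, ht⟩, Subtype.ext hxt⟩
  · rw [Topology.IsInducing.subtypeVal.continuousOn_iff]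
    exact (Φ.continuousOn_symm.mono fun z hz => (hball hz).1).congr hgval
  · intro z hz
    have h := Φ.right_inv (hball hz).1
    rw [hΦc] at h
    rw [hgval z hz]
    exact ⟨congrArg Prod.fst h, congrArg Prod.snd h⟩
  · rintro x ⟨hx₁, hx₂⟩
    refine ⟨hx₂, Subtype.ext ?_⟩
    exact (hgval _ hx₂).trans (Φ.left_inv hx₁)
end
end

section
/- Let Ω ⊂ ℝ² be a bounded open C² domain and v ∈ C²(closure Ω) a positive function on Ω with v = 0 on ∂Ω. If v has a unique critical point in Ω, then the following equivalence holds: every superlevel set {x ∈ Ω : v(x) > c}, 0 ≤ c < max v, is convex if and only if L_v ≤ 0 at every point of Ω. -/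
/-!
If the superlevel sets are convex and `L_v(p) > 0`, then `v` restricted to the tangent line of the
level curve at `p` has a strict local minimum at `p`, so two symmetric points of that line lie in
`{v > v(p)}` while their midpoint `p` does not (`Lcurv_nonpos_of_convex`).

Conversely let `L_v ≤ 0`, let `c > 0` and `U = {v > c}`. Each component of `U` contains an interior
maximum of `v`, hence the unique critical point, so `U` is connected (`crit_mem_component`). Given
`x, y ∈ U`, join them by a path in `U` and let `z` run along the path from `x` to `y`. Around the
segment `[x, z]` consider a thin hourglass, a strip whose two long sides are parabolic arcs bending
towards the segment, with ends so short that they remain in `U`. The set of `z` whose hourglass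
lies in `U` is open. It is also closed along the path: a limiting hourglass lies in `{v ≥ c}`, and
if it touches `{v = c}` at a point, this point is not critical, so it lies on a long side and `Dv`
points into the hourglass. As the side bends strictly towards the segment, minimality of `v` along
it gives `D²v(b, b) > 0` for the tangent vector `b ⊥ Dv`, which is `L_v > 0`
(`no_touching`). Hence the hourglass of `[x, y]`, and with it the segment, lies in `U`
(`segment_subset_superlevel`). The use of strictly bent arcs makes the nonstrict
hypothesis `L_v ≤ 0` sufficient.
-/

noncomputable section
open Set
open scoped RealInnerProductSpace

/-- `Ω ⊂ ℝ²` is a bounded domain with `C²` boundary. -/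
def C2Domain (Ω : Set E2) : Prop :=
  IsOpen Ω ∧ Bornology.IsBounded Ω ∧ Ω.Nonempty ∧
    ∃ f : E2 → ℝ, ContDiff ℝ 2 f ∧ Ω = {x | f x < 0} ∧ frontier Ω = {x | f x = 0} ∧
      ∀ x ∈ frontier Ω, gradient f x ≠ 0

open Filter Topology

/-! ### Second-order conditions along curves -/

/-- Strict form of the second derivative test, the derivatives being given by `HasDerivAt`. -/
lemma strict_min_of_second_deriv_pos {f g : ℝ → ℝ} {A : ℝ}
    (hf : ∀ᶠ t in 𝓝 (0:ℝ), HasDerivAt f (g t) t) (hg : HasDerivAt g A 0) (hg0 : g 0 = 0)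
    (hA : 0 < A) : ∀ᶠ t in 𝓝[≠] (0:ℝ), f 0 < f t := by
  -- Subtracting `(A/4) t²` keeps a positive second derivative, so the plain test applies.
  set F : ℝ → ℝ := fun t => f t - A / 4 * t ^ 2 with hF
  have hFd : ∀ᶠ t in 𝓝 (0:ℝ), HasDerivAt F (g t - A / 2 * t) t := by
    filter_upwards [hf] with t ht
    have h2 : HasDerivAt (fun t : ℝ => A / 4 * t ^ 2) (A / 4 * (2 * t)) t := by
      simpa using (hasDerivAt_pow 2 t).const_mul (A / 4)
    exact (ht.sub h2).congr_deriv (by ring)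
  have hd : deriv F =ᶠ[𝓝 0] fun t => g t - A / 2 * t := by
    filter_upwards [hFd] with t ht using ht.deriv
  have hdd : deriv (deriv F) 0 = A / 2 := by
    rw [hd.deriv_eq]
    have h2 : HasDerivAt (fun t : ℝ => A / 2 * t) (A / 2) 0 := by
      simpa using (hasDerivAt_id (0:ℝ)).const_mul (A / 2)
    exact ((hg.sub h2).congr_deriv (by ring)).deriv
  have hmin : IsLocalMin F 0 := by
    refine isLocalMin_of_deriv_deriv_pos (by rw [hdd]; linarith) ?_
      hFd.self_of_nhds.continuousAt
    rw [hd.eq_of_nhds]; simp [hg0]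
  filter_upwards [hmin.filter_mono nhdsWithin_le_nhds, self_mem_nhdsWithin] with t ht ht0
  have : 0 < t ^ 2 := by
    have : t ≠ 0 := ht0
    positivity
  simp only [hF] at ht
  nlinarith

lemma second_deriv_nonneg_of_min {f g : ℝ → ℝ} {A : ℝ}
    (hf : ∀ᶠ t in 𝓝 (0:ℝ), HasDerivAt f (g t) t) (hg : HasDerivAt g A 0)
    (hmin : IsLocalMin f 0) : 0 ≤ A := by
  by_contra! hA
  have hg0 : g 0 = 0 := hmin.hasDerivAt_eq_zero hf.self_of_nhds
  have h := strict_min_of_second_deriv_pos (f := fun t => - f t) (g := fun t => - g t) (A := -A)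
    (hf.mono fun t ht => ht.neg) hg.neg (by simp [hg0]) (by linarith)
  obtain ⟨t, h1, h2⟩ := (h.and (hmin.filter_mono nhdsWithin_le_nhds)).exists
  linarith

/-- First derivative of `v` along the parabola `t ↦ p + t b + t² d`, for `t` near `0`. -/
lemma hasDerivAt_along {v : E2 → ℝ} {p : E2} (hv : ContDiffAt ℝ 2 v p) (b d : E2) :
    ∀ᶠ t in 𝓝 (0:ℝ), HasDerivAt (fun t : ℝ => v (p + t • b + t ^ 2 • d))
      (fderiv ℝ v (p + t • b + t ^ 2 • d) (b + (2 * t) • d)) t := by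
  have hc : ContinuousAt (fun t : ℝ => p + t • b + t ^ 2 • d) 0 := by fun_prop
  have he : ∀ᶠ y in 𝓝 p, ContDiffAt ℝ 2 v y := hv.eventually (by simp)
  have he' : ∀ᶠ t in 𝓝 (0:ℝ), ContDiffAt ℝ 2 v (p + t • b + t ^ 2 • d) := by
    apply hc.eventually; simpa using he
  filter_upwards [he'] with t ht
  have hγ : HasDerivAt (fun t : ℝ => p + t • b + t ^ 2 • d) (b + (2 * t) • d) t := by
    have h1 : HasDerivAt (fun t : ℝ => t • b) b t := by
      simpa using (hasDerivAt_id t).smul_const b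
    have h2 : HasDerivAt (fun t : ℝ => t ^ 2 • d) ((2 * t) • d) t := by
      simpa using (hasDerivAt_pow 2 t).smul_const d
    exact (h1.const_add p).add h2
  exact (ht.differentiableAt (by simp)).hasFDerivAt.comp_hasDerivAt t hγ

/-- Second derivative of `v` along the parabola `t ↦ p + t b + t² d` at `t = 0`. -/
lemma hasDerivAt_along_deriv {v : E2 → ℝ} {p : E2} (hv : ContDiffAt ℝ 2 v p) (b d : E2) :
    HasDerivAt (fun t : ℝ => fderiv ℝ v (p + t • b + t ^ 2 • d) (b + (2 * t) • d))
      (fderiv ℝ (fderiv ℝ v) p b b + 2 * fderiv ℝ v p d) 0 := by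
  have hγ : HasDerivAt (fun t : ℝ => p + t • b + t ^ 2 • d) b 0 := by
    have h1 : HasDerivAt (fun t : ℝ => t • b) b 0 := by
      simpa using (hasDerivAt_id (0:ℝ)).smul_const b
    have h2 : HasDerivAt (fun t : ℝ => t ^ 2 • d) 0 0 := by
      simpa using (hasDerivAt_pow 2 (0:ℝ)).smul_const d
    exact ((h1.const_add p).add h2).congr_deriv (add_zero b)
  have hD : HasFDerivAt (fderiv ℝ v) (fderiv ℝ (fderiv ℝ v) p)
      (p + (0:ℝ) • b + (0:ℝ) ^ 2 • d) := by
    have : DifferentiableAt ℝ (fderiv ℝ v) p :=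
      (hv.fderiv_right (m := 1) (by norm_num)).differentiableAt (by simp)
    simpa using this.hasFDerivAt
  have h1 := hD.comp_hasDerivAt (0:ℝ) hγ
  have h2 : HasDerivAt (fun t : ℝ => b + (2 * t) • d) ((2:ℝ) • d) 0 := by
    have h3 : HasDerivAt (fun t : ℝ => 2 * t) 2 0 := by
      simpa using (hasDerivAt_id (0:ℝ)).const_mul 2
    exact (h3.smul_const d).const_add b
  simpa using h1.clm_apply h2

/-! ### The operator `L_v` in terms of the second derivative -/

lemma E2_eq (b : E2) : b = b 0 • e2 0 + b 1 • e2 1 := by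
  ext i; fin_cases i <;> simp [e2]

lemma hess2_eq_s18 {v : E2 → ℝ} {p : E2} (hv : ContDiffAt ℝ 2 v p) (a b : E2) :
    hess2 v p a b = fderiv ℝ (fderiv ℝ v) p a b := by
  have : DifferentiableAt ℝ (fderiv ℝ v) p :=
    (hv.fderiv_right (m := 1) (by norm_num)).differentiableAt (by simp)
  unfold hess2
  rw [fderiv_clm_apply this (differentiableAt_const b)]
  simp

lemma fderiv_coord (v : E2 → ℝ) (p b : E2) :
    fderiv ℝ v p b = b 0 * fderiv ℝ v p (e2 0) + b 1 * fderiv ℝ v p (e2 1) := by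
  conv_lhs => rw [E2_eq b]
  simp

lemma snd_coord {v : E2 → ℝ} {p : E2} (hv : ContDiffAt ℝ 2 v p) (b : E2) :
    fderiv ℝ (fderiv ℝ v) p b b = b 0 ^ 2 * hess2 v p (e2 0) (e2 0)
      + 2 * b 0 * b 1 * hess2 v p (e2 0) (e2 1) + b 1 ^ 2 * hess2 v p (e2 1) (e2 1) := by
  have hs : fderiv ℝ (fderiv ℝ v) p (e2 1) (e2 0) = fderiv ℝ (fderiv ℝ v) p (e2 0) (e2 1) :=
    (hv.isSymmSndFDerivAt (by simp)) _ _
  conv_lhs => rw [E2_eq b]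
  simp only [hess2_eq_s18 hv, map_add, map_smul, add_apply,
    smul_apply, smul_eq_mul, hs]
  ring

/-- For `b` tangent to the level curve, `|Dv|² D²v(b,b) = |b|² L_v`. -/
lemma snd_tangent {v : E2 → ℝ} {p b : E2} (hv : ContDiffAt ℝ 2 v p) (hb : fderiv ℝ v p b = 0) :
    (fderiv ℝ v p (e2 0) ^ 2 + fderiv ℝ v p (e2 1) ^ 2) * fderiv ℝ (fderiv ℝ v) p b b
      = (b 0 ^ 2 + b 1 ^ 2) * Lcurv v p := by
  rw [snd_coord hv, Lcurv]
  rw [fderiv_coord] at hb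
  generalize fderiv ℝ v p (e2 0) = α at *
  generalize fderiv ℝ v p (e2 1) = β at *
  generalize hess2 v p (e2 0) (e2 0) = A at *
  generalize hess2 v p (e2 0) (e2 1) = B at *
  generalize hess2 v p (e2 1) (e2 1) = C at *
  linear_combination (A * (b 0 * α - b 1 * β) + 2 * B * (b 0 * β + b 1 * α)
    + C * (b 1 * β - b 0 * α)) * hb

/-! ### Convex superlevel sets force `L_v ≤ 0` -/

lemma Lcurv_nonpos_of_convex {Ω : Set E2} (hΩ : IsOpen Ω) {v : E2 → ℝ} {p : E2} (hp : p ∈ Ω)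
    (hv : ContDiffAt ℝ 2 v p) (hpos : 0 < v p) (hbdd : BddAbove (v '' Ω))
    (h : ∀ c : ℝ, 0 ≤ c → c < sSup (v '' Ω) → Convex ℝ {x ∈ Ω | c < v x}) :
    Lcurv v p ≤ 0 := by
  by_contra! hL
  set w : E2 := fderiv ℝ v p (e2 1) • e2 0 - fderiv ℝ v p (e2 0) • e2 1 with hw
  have hw0 : w 0 = fderiv ℝ v p (e2 1) := by simp [hw, e2]
  have hw1 : w 1 = - fderiv ℝ v p (e2 0) := by simp [hw, e2]
  have htan : fderiv ℝ v p w = 0 := by rw [fderiv_coord, hw0, hw1]; ring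
  have hsnd : fderiv ℝ (fderiv ℝ v) p w w = Lcurv v p := by
    rw [snd_coord hv, hw0, hw1, Lcurv]; ring
  have hstrict := strict_min_of_second_deriv_pos (hasDerivAt_along hv w 0)
    (hasDerivAt_along_deriv hv w 0) (by simpa using htan) (by simpa [hsnd] using hL)
  simp only [smul_zero, add_zero, zero_smul] at hstrict
  have hin : ∀ᶠ t in 𝓝[≠] (0:ℝ), p + t • w ∈ Ω := by
    have hc : ContinuousAt (fun t : ℝ => p + t • w) 0 := by fun_prop
    exact (hc.eventually (by simpa using hΩ.mem_nhds hp)).filter_mono nhdsWithin_le_nhds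
  have hboth := hstrict.and hin
  have hneg : Tendsto (fun t : ℝ => -t) (𝓝[≠] 0) (𝓝[≠] 0) := by
    refine tendsto_nhdsWithin_iff.2 ⟨?_, ?_⟩
    · have : Tendsto (fun t : ℝ => -t) (𝓝 0) (𝓝 (-0)) := (continuous_neg.tendsto 0)
      rw [neg_zero] at this
      exact this.mono_left nhdsWithin_le_nhds
    · filter_upwards [self_mem_nhdsWithin] with t ht using by simpa using ht
  obtain ⟨t, ⟨h1, h2⟩, h3, h4⟩ := (hboth.and (hneg.eventually hboth)).exists
  have hconv := h (v p) hpos.le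
    (lt_of_lt_of_le h1 (le_csSup hbdd (mem_image_of_mem v h2)))
  have hmid := hconv (x := p + t • w) ⟨h2, h1⟩ (y := p + (-t) • w) ⟨h4, h3⟩
    (a := 1 / 2) (b := 1 / 2) (by norm_num) (by norm_num) (by norm_num)
  have he : (1 / 2 : ℝ) • (p + t • w) + (1 / 2 : ℝ) • (p + (-t) • w) = p := by module
  rw [he] at hmid
  exact lt_irrefl _ hmid.2

/-! ### Connectedness of the superlevel sets -/

section Superlevel

variable {Ω : Set E2} {v : E2 → ℝ}

lemma isOpen_superlevel (hΩ : IsOpen Ω) (hv : ContinuousOn v (closure Ω)) (c : ℝ) :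
    IsOpen {x ∈ Ω | c < v x} :=
  (hv.mono subset_closure).isOpen_inter_preimage hΩ isOpen_Ioi

lemma mem_of_closure_of_pos (hΩ : IsOpen Ω) (hbd : ∀ x ∈ frontier Ω, v x = 0) {x : E2}
    (hx : x ∈ closure Ω) (hvx : 0 < v x) : x ∈ Ω := by
  by_contra hn
  have := hbd x (by rw [hΩ.frontier_eq]; exact ⟨hx, hn⟩)
  linarith

/-- Every connected component of a superlevel set contains the maximum of `v` over its closure,
which is a critical point; hence all of them contain the unique critical point. -/
lemma crit_mem_component (hΩ : IsOpen Ω) (hbdd : Bornology.IsBounded Ω)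
    (hv : ContinuousOn v (closure Ω)) (hbd : ∀ x ∈ frontier Ω, v x = 0) {x₀ : E2}
    (hcrit : ∀ x ∈ Ω, fderiv ℝ v x = 0 → x = x₀) {c : ℝ} (hc : 0 ≤ c) {x : E2}
    (hx : x ∈ {x ∈ Ω | c < v x}) :
    x₀ ∈ connectedComponentIn {x ∈ Ω | c < v x} x := by
  set U := {x ∈ Ω | c < v x} with hU
  set C := connectedComponentIn U x with hC
  have hCU : C ⊆ U := connectedComponentIn_subset U x
  have hCΩ : closure C ⊆ closure Ω := closure_mono (hCU.trans fun y hy => hy.1)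
  have hxC : x ∈ C := mem_connectedComponentIn hx
  have hcomp : IsCompact (closure C) :=
    (hbdd.subset (hCU.trans fun y hy => hy.1)).isCompact_closure
  obtain ⟨m, hm, hmax⟩ := hcomp.exists_isMaxOn ⟨x, subset_closure hxC⟩ (hv.mono hCΩ)
  have hxm : v x ≤ v m := hmax (subset_closure hxC)
  have hcm : c < v m := lt_of_lt_of_le hx.2 hxm
  have hmΩ : m ∈ Ω := mem_of_closure_of_pos hΩ hbd (hCΩ hm) (by linarith)
  have hmC : m ∈ C := by
    have hpre : IsPreconnected (insert m C) :=
      isPreconnected_connectedComponentIn.subset_closure (subset_insert m C)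
        (insert_subset hm subset_closure)
    exact hpre.subset_connectedComponentIn (mem_insert_of_mem m hxC)
      (insert_subset (show m ∈ U from ⟨hmΩ, hcm⟩) hCU) (mem_insert m C)
  have hCo : IsOpen C := (isOpen_superlevel hΩ hv c).connectedComponentIn
  have hloc : IsLocalMax v m := by
    filter_upwards [hCo.mem_nhds hmC] with y hy using hmax (subset_closure hy)
  rw [← hcrit m hmΩ hloc.fderiv_eq_zero]
  exact hmC

end Superlevel

/-! ### The sweeping argument -/

/-- Rotation by a right angle. -/
def rot (q : E2) : E2 := (-(q 1)) • e2 0 + (q 0) • e2 1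

lemma rot_zero (q : E2) : rot q 0 = -(q 1) := by simp [rot, e2]

lemma rot_one (q : E2) : rot q 1 = q 0 := by simp [rot, e2]

lemma continuous_rot : Continuous rot := by
  unfold rot; fun_prop

/-- The hourglass around the segment `[x, y]`: for fixed `s.2 = θ ∈ [-1, 1]` the curve
`t ↦ hourglass k x y (t, θ)` (`t = s.1`) is a parabolic arc over the segment, displaced by
`θ k (1 - t + t²)` times the normal `rot (y - x)`; for `k > 0` the arc with `θ ≠ 0` bends towards the
segment, and the arc with `θ = 0` is the segment itself. -/
def hourglass (k : ℝ) (x y : E2) (s : ℝ × ℝ) : E2 :=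
  x + s.1 • (y - x) + (s.2 * k * (1 - s.1 + s.1 ^ 2)) • rot (y - x)

lemma continuous_hourglass (k : ℝ) (x : E2) :
    Continuous fun z : E2 × (ℝ × ℝ) => hourglass k x z.1 z.2 := by
  have := continuous_rot
  unfold hourglass; fun_prop

/-- A linear function of slope `m a` on `[-1, 1]` which is minimal at `θ` forces `θ = ± 1`, with
sign opposite to that of `a`. -/
lemma sign_of_sides {m a θ : ℝ} (hm : 0 < m) (ha : a ≠ 0) (h1 : 0 ≤ (1 - θ) * (m * a))
    (h2 : 0 ≤ (-1 - θ) * (m * a)) : θ * a < 0 := by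
  rcases lt_or_gt_of_ne ha with hlt | hgt
  · have hneg : m * a < 0 := mul_neg_of_pos_of_neg hm hlt
    have : 1 ≤ θ := by nlinarith
    nlinarith
  · have hps : 0 < m * a := mul_pos hm hgt
    have : θ ≤ -1 := by nlinarith
    nlinarith

/-- An hourglass contained in `{v ≥ c}` cannot touch the
level `c` at a noncritical point coming from `0 < t < 1` if `L_v ≤ 0` there. -/
lemma no_touching {v : E2 → ℝ} {k t θ c : ℝ} {x y : E2} (hk : 0 < k) (hxy : x ≠ y)
    (ht : t ∈ Ioo (0:ℝ) 1) (hθ : θ ∈ Icc (-1:ℝ) 1)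
    (hv : ContDiffAt ℝ 2 v (hourglass k x y (t, θ)))
    (hL : Lcurv v (hourglass k x y (t, θ)) ≤ 0)
    (hD : fderiv ℝ v (hourglass k x y (t, θ)) ≠ 0)
    (hvc : v (hourglass k x y (t, θ)) = c)
    (hge : ∀ s ∈ Icc (0:ℝ) 1 ×ˢ Icc (-1:ℝ) 1, c ≤ v (hourglass k x y s)) : False := by
  set p := hourglass k x y (t, θ) with hp
  set q := y - x with hq
  set N := rot q with hN
  set b := q + (θ * k * (2 * t - 1)) • N with hb
  set d := (θ * k) • N with hd
  set α := fderiv ℝ v p (e2 0) with hα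
  set β := fderiv ℝ v p (e2 1) with hβ
  have hq0 : 0 < q 0 ^ 2 + q 1 ^ 2 := by
    by_contra! hle
    have h0 : q 0 = 0 := by nlinarith [sq_nonneg (q 0), sq_nonneg (q 1)]
    have h1 : q 1 = 0 := by nlinarith [sq_nonneg (q 0), sq_nonneg (q 1)]
    apply hxy
    have : q = 0 := by rw [E2_eq q, h0, h1]; simp
    exact (sub_eq_zero.1 this).symm
  -- the arc through the touching point
  have hcurve : ∀ τ : ℝ, hourglass k x y (t + τ, θ) = p + τ • b + τ ^ 2 • d := by
    intro τ
    simp only [hp, hourglass, hb, hd, ← hq, ← hN]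
    module
  have hmin : IsLocalMin (fun τ : ℝ => v (p + τ • b + τ ^ 2 • d)) 0 := by
    have hev : ∀ᶠ τ in 𝓝 (0:ℝ), t + τ ∈ Ioo (0:ℝ) 1 := by
      have hc : ContinuousAt (fun τ : ℝ => t + τ) 0 := by fun_prop
      exact hc.eventually_mem (isOpen_Ioo.mem_nhds (by simpa using ht))
    filter_upwards [hev] with τ hτ
    have := hge (t + τ, θ) ⟨Ioo_subset_Icc_self hτ, hθ⟩
    rw [hcurve] at this
    simpa [hvc] using this
  have htan : fderiv ℝ v p b = 0 := by
    have := hmin.hasDerivAt_eq_zero (hasDerivAt_along hv b d).self_of_nhds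
    simpa using this
  have hsnd := second_deriv_nonneg_of_min (hasDerivAt_along hv b d)
    (hasDerivAt_along_deriv hv b d) hmin
  -- moving `θ` instead of `t`
  set m := k * (1 - t + t ^ 2) with hm
  have hmpos : 0 < m := mul_pos hk (by nlinarith [ht.1, ht.2])
  have hside : ∀ z ∈ Icc (-1:ℝ) 1, 0 ≤ (z - θ) * (m * fderiv ℝ v p N) := by
    intro z hz
    have hmap : ∀ η : ℝ, hourglass k x y (t, η) = x + t • q + (η * m) • N := by
      intro η
      simp only [hourglass, ← hq, ← hN, hm]
      module
    have hder : HasDerivAt (fun η : ℝ => v (hourglass k x y (t, η))) (m * fderiv ℝ v p N) θ := by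
      have h1 : HasDerivAt (fun η : ℝ => hourglass k x y (t, η)) (m • N) θ := by
        simp only [hmap]
        have h2 : HasDerivAt (fun η : ℝ => η * m) m θ := by
          simpa using (hasDerivAt_id θ).mul_const m
        exact (h2.smul_const N).const_add _
      have := (hv.differentiableAt (by simp)).hasFDerivAt.comp_hasDerivAt θ h1
      exact this.congr_deriv (by rw [map_smul, smul_eq_mul])
    have hmin' : IsLocalMinOn (fun η : ℝ => v (hourglass k x y (t, η))) (Icc (-1:ℝ) 1) θ := by
      filter_upwards [self_mem_nhdsWithin] with η hη
      have := hge (t, η) ⟨Ioo_subset_Icc_self ht, hη⟩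
      simpa [← hp, hvc] using this
    have hcone : z - θ ∈ posTangentConeAt (Icc (-1:ℝ) 1) θ :=
      sub_mem_posTangentConeAt_of_segment_subset ((convex_Icc _ _).segment_subset hθ hz)
    simpa using hmin'.hasFDerivWithinAt_nonneg hder.hasFDerivAt.hasFDerivWithinAt hcone
  have hN0 : N 0 = -(q 1) := rot_zero q
  have hN1 : N 1 = q 0 := rot_one q
  have hαβ : 0 < α ^ 2 + β ^ 2 := by
    by_contra! hle
    have h0 : α = 0 := by nlinarith [sq_nonneg α, sq_nonneg β]
    have h1 : β = 0 := by nlinarith [sq_nonneg α, sq_nonneg β]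
    apply hD
    ext z
    rw [fderiv_coord, ← hα, ← hβ, h0, h1]; simp
  have hDN : fderiv ℝ v p N ≠ 0 := by
    intro h0
    have hDq : fderiv ℝ v p q = 0 := by
      rw [hb, map_add, map_smul, h0] at htan
      simpa using htan
    rw [fderiv_coord, ← hα, ← hβ, hN0, hN1] at h0
    rw [fderiv_coord, ← hα, ← hβ] at hDq
    have h3 : (q 0 ^ 2 + q 1 ^ 2) * (α ^ 2 + β ^ 2) = 0 := by
      linear_combination (q 0 * α + q 1 * β) * hDq + (-q 1 * α + q 0 * β) * h0
    have := mul_pos hq0 hαβ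
    linarith
  -- the touching point lies on a long side, where the gradient points into the hourglass
  have hsign : θ * fderiv ℝ v p N < 0 := by
    have h1 := hside 1 (by norm_num)
    have h2 := hside (-1) (by norm_num)
    exact sign_of_sides hmpos hDN h1 h2
  have hdneg : fderiv ℝ v p d < 0 := by
    rw [hd, map_smul, smul_eq_mul, mul_right_comm]
    exact mul_neg_of_neg_of_pos hsign hk
  have hbb : 0 < fderiv ℝ (fderiv ℝ v) p b b := by linarith
  have hid := snd_tangent hv htan
  rw [← hα, ← hβ] at hid
  have h4 := mul_pos hαβ hbb
  have h5 := mul_nonpos_of_nonneg_of_nonpos (add_nonneg (sq_nonneg (b 0)) (sq_nonneg (b 1))) hL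
  rw [hid] at h4
  exact absurd h4 (not_lt.2 h5)

/-- For `c > 0` and `L_v ≤ 0`, the hourglass from `x` to a point moving along a path in `{v > c}`
never leaves `{v > c}`; its middle arc is the segment. -/
lemma segment_subset_superlevel {Ω : Set E2} {v : E2 → ℝ} (hΩ : IsOpen Ω)
    (hbdd : Bornology.IsBounded Ω) (hv : ContDiffOn ℝ 2 v (closure Ω))
    (hbd : ∀ x ∈ frontier Ω, v x = 0) {x₀ : E2}
    (hcrit : ∀ x ∈ Ω, fderiv ℝ v x = 0 → x = x₀)
    (hL : ∀ x ∈ Ω, Lcurv v x ≤ 0) {c : ℝ} (hc : 0 < c) {x y : E2}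
    (hx : x ∈ {x ∈ Ω | c < v x}) (hy : y ∈ {x ∈ Ω | c < v x}) :
    segment ℝ x y ⊆ {x ∈ Ω | c < v x} := by
  have hvc := hv.continuousOn
  have hcomp := fun z hz => crit_mem_component (x := z) hΩ hbdd hvc hbd hcrit hc.le hz
  set U := {x ∈ Ω | c < v x} with hU
  have hUo : IsOpen U := isOpen_superlevel hΩ hvc c
  have hx₀ : x₀ ∈ U := connectedComponentIn_subset U x (hcomp x hx)
  have hconn : IsConnected U := by
    refine ⟨⟨x, hx⟩, isPreconnected_of_forall x₀ fun z hz => ?_⟩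
    exact ⟨_, connectedComponentIn_subset U z, hcomp z hz, mem_connectedComponentIn hz,
      isPreconnected_connectedComponentIn⟩
  obtain ⟨σ, hσ⟩ := (hUo.isConnected_iff_isPathConnected.1 hconn).joinedIn x hx y hy
  set P : Set E2 := range σ with hP
  have hPc : IsCompact P := isCompact_range σ.continuous
  have hPp : IsPreconnected P := isPreconnected_range σ.continuous
  have hxP : x ∈ P := ⟨0, σ.source⟩
  have hyP : y ∈ P := ⟨1, σ.target⟩
  have hPU : P ⊆ U := by rintro _ ⟨s, rfl⟩; exact hσ s
  obtain ⟨r, hr, hthick⟩ := hPc.exists_thickening_subset_open hUo hPU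
  obtain ⟨D, hDb⟩ := hPc.exists_bound_of_continuousOn (f := fun z => rot (z - x))
    (continuous_rot.comp (continuous_id.sub continuous_const)).continuousOn
  have hD0 : 0 ≤ D := (norm_nonneg _).trans (hDb x hxP)
  -- the ends of every hourglass stay within distance `r` of the path
  set k : ℝ := r / (D + 1) with hk
  have hkpos : 0 < k := by positivity
  have hkD : k * D < r := by
    rw [hk, div_mul_eq_mul_div, div_lt_iff₀ (by positivity)]; nlinarith
  have hend : ∀ z ∈ P, ∀ w ∈ P, ∀ θ ∈ Icc (-1:ℝ) 1, w + (θ * k) • rot (z - x) ∈ U := by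
    intro z hz w hw θ hθ
    apply hthick
    rw [Metric.mem_thickening_iff]
    refine ⟨w, hw, ?_⟩
    rw [dist_eq_norm, add_sub_cancel_left, norm_smul, Real.norm_eq_abs, abs_mul,
      abs_of_pos hkpos]
    have h1 : |θ| ≤ 1 := abs_le.2 hθ
    have h2 := hDb z hz
    calc |θ| * k * ‖rot (z - x)‖ ≤ 1 * k * D := by gcongr
      _ < r := by linarith
  set K : Set (ℝ × ℝ) := Icc (0:ℝ) 1 ×ˢ Icc (-1:ℝ) 1 with hK
  have hKc : IsCompact K := isCompact_Icc.prod isCompact_Icc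
  set A : Set E2 := {z | ∀ s ∈ K, hourglass k x z s ∈ U} with hA
  have hcont := continuous_hourglass k x
  have hAo : IsOpen A := by
    rw [isOpen_iff_mem_nhds]
    intro z hz
    refine hKc.eventually_forall_of_forall_eventually (x₀ := z)
      (P := fun z s => hourglass k x z s ∈ U) fun s hs => ?_
    exact hcont.continuousAt.eventually (hUo.mem_nhds (hz s hs))
  have hcl : ∀ z ∈ closure A, ∀ s ∈ K, hourglass k x z s ∈ closure U := by
    intro z hz s hs
    have hc' : Continuous fun z => hourglass k x z s := by
      have := continuous_rot
      unfold hourglass; fun_prop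
    exact map_mem_closure (f := fun z => hourglass k x z s) hc' hz fun w hw => hw s hs
  have hstep : closure A ∩ P ⊆ A := by
    rintro z ⟨hzA, hzP⟩ ⟨t, θ⟩ hs
    have hclU : closure U ⊆ {w ∈ closure Ω | c ≤ v w} := by
      have hclosed : IsClosed {w ∈ closure Ω | c ≤ v w} :=
        hvc.preimage_isClosed_of_isClosed isClosed_closure isClosed_Ici
      exact closure_minimal (fun w hw => ⟨subset_closure hw.1, hw.2.le⟩) hclosed
    have hmem := fun s hs => hclU (hcl z hzA s hs)
    by_cases hxz : x = z
    · have : hourglass k x z (t, θ) = x := by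
        simp [hourglass, ← hxz, rot]
      rw [this]; exact hx
    have hpΩ : hourglass k x z (t, θ) ∈ Ω :=
      mem_of_closure_of_pos hΩ hbd (hmem _ hs).1 (hc.trans_le (hmem _ hs).2)
    by_contra hn
    have hval : v (hourglass k x z (t, θ)) = c := by
      refine le_antisymm ?_ (hmem _ hs).2
      by_contra! hlt
      exact hn ⟨hpΩ, hlt⟩
    obtain ⟨⟨ht0, ht1⟩, hθ⟩ := hs
    have ht0' : t ≠ 0 := by
      rintro rfl
      apply hn
      have := hend z hzP x hxP θ hθ
      simpa [hourglass] using this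
    have ht1' : t ≠ 1 := by
      rintro rfl
      apply hn
      have := hend z hzP z hzP θ hθ
      simpa [hourglass] using this
    refine no_touching hkpos hxz ⟨lt_of_le_of_ne ht0 ht0'.symm, lt_of_le_of_ne ht1 ht1'⟩ hθ
      (hv.contDiffAt (mem_of_superset (hΩ.mem_nhds hpΩ) subset_closure)) (hL _ hpΩ) ?_ hval
      (fun s hs => (hmem s hs).2)
    intro h0
    rw [hcrit _ hpΩ h0] at hval
    exact absurd hval (ne_of_gt hx₀.2)
  have hxA : x ∈ A := by
    intro s _
    have : hourglass k x x s = x := by simp [hourglass, rot]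
    rw [this]; exact hx
  have hPA := hPp.subset_of_closure_inter_subset hAo ⟨x, hxP, hxA⟩ hstep
  rw [segment_eq_image']
  rintro _ ⟨t, ht, rfl⟩
  have := hPA hyP (t, 0) ⟨ht, by norm_num⟩
  simpa [hourglass] using this

/-- **Theorem C.1.**  Let `v ∈ C²(closure Ω)` be positive on the bounded `C²`
planar domain `Ω` with `v = 0` on `∂Ω`, and suppose `v` has a unique critical point in `Ω`.
Then every superlevel set `{x ∈ Ω : v(x) > c}`, `0 ≤ c < max v`, is convex if and only if
`L_v ≤ 0` at every point of `Ω`. -/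
theorem level_sets_convex_iff_Lcurv_nonpos (Ω : Set E2) (hΩ : C2Domain Ω)
    (v : E2 → ℝ) (hv : ContDiffOn ℝ 2 v (closure Ω))
    (hpos : ∀ x ∈ Ω, 0 < v x) (hbd : ∀ x ∈ frontier Ω, v x = 0)
    (hcrit : ∃! x : E2, x ∈ Ω ∧ fderiv ℝ v x = 0) :
    (∀ c : ℝ, 0 ≤ c → c < sSup (v '' Ω) → Convex ℝ {x ∈ Ω | c < v x}) ↔
      ∀ x ∈ Ω, Lcurv v x ≤ 0 := by
  obtain ⟨hΩo, hbdd, -, -⟩ := hΩ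
  constructor
  · intro h p hp
    have hbA : BddAbove (v '' Ω) :=
      (hbdd.isCompact_closure.bddAbove_image hv.continuousOn).mono (image_mono subset_closure)
    exact Lcurv_nonpos_of_convex hΩo hp
      (hv.contDiffAt (mem_of_superset (hΩo.mem_nhds hp) subset_closure)) (hpos p hp) hbA h
  · intro hL c hc _
    obtain ⟨x₀, -, huniq⟩ := hcrit
    rw [convex_iff_segment_subset]
    intro x hx y hy
    -- a level strictly between `c` and both values is positive even if `c = 0`
    obtain ⟨c', hcc', hc'⟩ := exists_between (lt_min hx.2 hy.2)
    have hsub := segment_subset_superlevel hΩo hbdd hv hbd (x₀ := x₀)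
      (fun z hz h0 => huniq z ⟨hz, h0⟩) hL (hc.trans_lt hcc')
      ⟨hx.1, hc'.trans_le (min_le_left _ _)⟩ ⟨hy.1, hc'.trans_le (min_le_right _ _)⟩
    exact fun z hz => ⟨(hsub hz).1, hcc'.trans (hsub hz).2⟩
end
end
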